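/- There is a constant q₀ depending only on n such that the following holds whenever q ≥ q₀: if 𝓕 is a ratio-sharp EKR-set of chambers, then there exists s ∈ [n] such that for every chamber C ∈ 𝓕 the s-space C_s is heavy with respect to 𝓕. -/

import Mathlib

open scoped Classical

open Module

section Defs

variable {F V : Type} [Field F] [AddCommGroup V] [Module F V]

/-- The orthogonal complement of a subspace with respect to a bilinear form. -/
def bperp (B : V →ₗ[F] V →ₗ[F] F) (W : Submodule F V) : Submodule F V :=
  ⨅ w ∈ W, LinearMap.ker (B w)

/-- A subspace is totally isotropic for `B`. -/
def IsTotIso (B : V →ₗ[F] V →ₗ[F] F) (W : Submodule F V) : Prop :=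
  ∀ u ∈ W, ∀ w ∈ W, B u w = 0

/-- `B` is an alternating form. -/
def IsAltForm (B : V →ₗ[F] V →ₗ[F] F) : Prop := ∀ v, B v v = 0

/-- `B` is nondegenerate. -/
def NondegForm (B : V →ₗ[F] V →ₗ[F] F) : Prop := ∀ v, (∀ w, B v w = 0) → v = 0

/-- A flag of type `J` of totally isotropic subspaces: entries outside `J` are `⊥`. -/
structure SFlag (B : V →ₗ[F] V →ₗ[F] F) (J : Finset ℕ) where
  space : ℕ → Submodule F V
  isotropic : ∀ i ∈ J, IsTotIso B (space i)
  finrank_eq : ∀ i ∈ J, Module.finrank F (space i) = i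
  mono : ∀ i ∈ J, ∀ j ∈ J, i ≤ j → space i ≤ space j
  eq_bot : ∀ i, i ∉ J → space i = ⊥

/-- Two flags of type `J` are opposite. -/
def FlagOpp {B : V →ₗ[F] V →ₗ[F] F} {J : Finset ℕ} (C C' : SFlag B J) : Prop :=
  ∀ i ∈ J, bperp B (C.space i) ⊓ C'.space i = ⊥

/-- An EKR-set of flags of type `J`: no two members are opposite. -/
def IsEKRFlags {B : V →ₗ[F] V →ₗ[F] F} {J : Finset ℕ} (𝓕 : Set (SFlag B J)) : Prop :=
  ∀ C ∈ 𝓕, ∀ C' ∈ 𝓕, ¬ FlagOpp C C'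

/-- Two subspaces are opposite. -/
def SpaceOpp (B : V →ₗ[F] V →ₗ[F] F) (S T : Submodule F V) : Prop :=
  bperp B S ⊓ T = ⊥

/-- An EKR-set of totally isotropic `s`-spaces: no two members are opposite. -/
def IsEKRSpaces (B : V →ₗ[F] V →ₗ[F] F) (s : ℕ) (𝓕 : Set (Submodule F V)) : Prop :=
  (∀ S ∈ 𝓕, IsTotIso B S ∧ Module.finrank F S = s) ∧
    ∀ S ∈ 𝓕, ∀ T ∈ 𝓕, ¬ SpaceOpp B S T

/-- An `s`-space `S` is heavy with respect to a set `𝓕` of flags: every flag whose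
`s`-th entry equals `S` belongs to `𝓕`. -/
def Heavy {B : V →ₗ[F] V →ₗ[F] F} {J : Finset ℕ} (𝓕 : Set (SFlag B J)) (s : ℕ)
    (S : Submodule F V) : Prop :=
  ∀ C : SFlag B J, C.space s = S → C ∈ 𝓕

end Defs

/-- `z_k = ∏_{i=1}^k (q^i-1)/(q-1)`. -/
noncomputable def zpol (q k : ℕ) : ℝ :=
  ∏ i ∈ Finset.Icc 1 k, ((q : ℝ) ^ i - 1) / ((q : ℝ) - 1)

/-- The Gaussian binomial coefficient `[m choose k]_q` as a real number. -/
noncomputable def gaussq (q m k : ℕ) : ℝ :=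
  ∏ i ∈ Finset.Icc 1 k, ((q : ℝ) ^ (m - k + i) - 1) / ((q : ℝ) ^ i - 1)

/-- `Φ_m^s` in `PS(n,1,q)`: the number of totally isotropic `s`-spaces containing a
fixed totally isotropic `m`-space. -/
noncomputable def PhiP (q n m s : ℕ) : ℝ :=
  gaussq q (n - m) (s - m) * ∏ i ∈ Finset.Icc 1 (s - m), ((q : ℝ) ^ (n - m + 1 - i) + 1)

/-! ### Abstract linear algebra -/

namespace PF

lemma abs_det_of_quad {E : Type*} [AddCommGroup E] [Module ℝ E] [FiniteDimensional ℝ E]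
    (q : ℝ) (hq : 0 < q) (T : Module.End ℝ E) (hT : ∀ x, T (T x) = (q - 1) • T x + q • x) :
    |LinearMap.det T| * q ^ (finrank ℝ (LinearMap.ker (T + 1))) = q ^ (finrank ℝ E) := by
  set W := LinearMap.ker (T + 1) with hW
  have hmem : ∀ x, x ∈ W ↔ T x = -x := by
    intro x
    rw [hW, LinearMap.mem_ker, LinearMap.add_apply, Module.End.one_apply, add_eq_zero_iff_eq_neg]
  have he : W ≤ W.comap T := by
    intro x hx
    rw [hmem] at hx
    rw [Submodule.mem_comap, hmem, hx, map_neg, hx]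
  rw [LinearMap.det_eq_det_mul_det W T he]
  have h1 : LinearMap.restrict T (p := W) (q := W) he = (-1 : ℝ) • LinearMap.id := by
    ext x
    have := (hmem x).1 x.2
    simp [this]
  have h2 : W.mapQ W T he = q • LinearMap.id := by
    ext x
    simp only [LinearMap.comp_apply, Submodule.mkQ_apply, Submodule.mapQ_apply,
      LinearMap.smul_apply, LinearMap.id_apply]
    rw [← Submodule.Quotient.mk_smul, Submodule.Quotient.eq, hmem, map_sub, hT, map_smul]
    module
  rw [h1, h2, LinearMap.det_smul, LinearMap.det_smul]
  simp only [LinearMap.det_id, mul_one, abs_mul, abs_pow, abs_neg, abs_one, one_pow, one_mul,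
    abs_of_pos hq]
  rw [← pow_add, Submodule.finrank_quotient_add_finrank]

theorem core {E : Type*} [AddCommGroup E] [Module ℝ E] [FiniteDimensional ℝ E] [Nontrivial E]
    (n : ℕ) (q : ℝ) (hq : 1 < q) (T : Fin n → Module.End ℝ E)
    (hT : ∀ i x, T i (T i x) = (q - 1) • T i x + q • x)
    (l : List (Fin n)) (hl : ∀ i, l.count i = n) (lam : ℝ)
    (hA : ∀ x, (l.map T).prod x = lam • x)
    (hker : ∀ x, (∀ i, T i x = q • x) → x = 0) (hn : 1 ≤ n) :
    |lam| ≤ q ^ (n * (n - 1)) ∧ (|lam| = q ^ (n * (n - 1)) →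
      ∀ v : E, ∃ g : Fin n → E, v = ∑ i, g i ∧ ∀ i j, j ≠ i → T j (g i) = q • g i) := by
  have hq0 : 0 < q := by linarith
  set d := finrank ℝ E with hd
  have hdpos : 0 < d := finrank_pos
  set m : Fin n → ℕ := fun i => finrank ℝ (LinearMap.ker (T i + 1)) with hm
  -- the map
  let Φ : E →ₗ[ℝ] (∀ i, LinearMap.ker (T i + 1)) :=
    LinearMap.pi (fun i => LinearMap.codRestrict _ (T i - q • 1) (by
      intro x
      rw [LinearMap.mem_ker]
      simp only [LinearMap.add_apply, LinearMap.sub_apply, LinearMap.smul_apply,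
        Module.End.one_apply, map_sub, map_smul, hT]
      module))
  have hΦ : ∀ x i, ((Φ x i : LinearMap.ker (T i + 1)) : E) = T i x - q • x := by
    intro x i; rfl
  have hinj : Function.Injective Φ := by
    rw [injective_iff_map_eq_zero]
    intro x hx
    apply hker
    intro i
    have := hΦ x i
    rw [hx] at this
    simp only [Pi.zero_apply, ZeroMemClass.coe_zero] at this
    exact (sub_eq_zero.1 this.symm)
  have hfr : finrank ℝ (∀ i, LinearMap.ker (T i + 1)) = ∑ i, m i := by
    rw [Module.finrank_pi_fintype]
  have hle : d ≤ ∑ i, m i := by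
    rw [← hfr]; exact LinearMap.finrank_le_finrank_of_injective hinj
  -- determinant
  have hA' : (l.map T).prod = lam • LinearMap.id := by
    ext x; simpa using hA x
  have hdet : |lam| ^ d = ∏ i, |LinearMap.det (T i)| ^ n := by
    have h1 : LinearMap.det (l.map T).prod = lam ^ d := by
      rw [hA', LinearMap.det_smul, LinearMap.det_id, mul_one]
    rw [map_list_prod, List.map_map] at h1
    rw [← abs_pow, ← h1, Finset.prod_list_map_count, Finset.abs_prod]
    have hsub : l.toFinset = Finset.univ := by
      ext i
      simp only [List.mem_toFinset, Finset.mem_univ, iff_true]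
      rw [← List.count_pos_iff, hl]; omega
    rw [hsub]
    apply Finset.prod_congr rfl
    intro i _
    rw [hl, abs_pow]; rfl
  have hdet2 : |lam| ^ d * q ^ (n * ∑ i, m i) = q ^ (n * (n * d)) := by
    rw [hdet, Finset.mul_sum, ← Finset.prod_pow_eq_pow_sum, ← Finset.prod_mul_distrib]
    have : ∀ i ∈ Finset.univ, |LinearMap.det (T i)| ^ n * q ^ (n * m i) = q ^ (n * d) := by
      intro i _
      rw [mul_comm n, pow_mul, ← mul_pow, abs_det_of_quad q hq0 (T i) (hT i), ← pow_mul, mul_comm]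
    rw [Finset.prod_congr rfl this, Finset.prod_const, Finset.card_univ, Fintype.card_fin,
      ← pow_mul]
    congr 1; ring
  have hexp : n * (n * d) = (n * (n - 1)) * d + n * d := by
    obtain ⟨k, rfl⟩ : ∃ k, n = k + 1 := ⟨n - 1, by omega⟩
    simp only [Nat.add_sub_cancel]; ring
  have hexp2 : q ^ (n * (n * d)) = (q ^ (n * (n - 1))) ^ d * q ^ (n * d) := by
    rw [hexp, pow_add, pow_mul]
  constructor
  · by_contra hlt
    push Not at hlt
    have h1 : (q ^ (n * (n - 1))) ^ d < |lam| ^ d := pow_lt_pow_left₀ hlt (by positivity) hdpos.ne'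
    have h2 : q ^ (n * d) ≤ q ^ (n * ∑ i, m i) :=
      pow_le_pow_right₀ hq.le (Nat.mul_le_mul_left _ hle)
    have h3 : (q ^ (n * (n - 1))) ^ d * q ^ (n * d) < |lam| ^ d * q ^ (n * ∑ i, m i) :=
      mul_lt_mul h1 h2 (by positivity) (by positivity)
    rw [hdet2, hexp2] at h3
    exact lt_irrefl _ h3
  · intro heq v
    have hs : ∑ i, m i = d := by
      rw [heq, hexp2] at hdet2
      have h4 := mul_left_cancel₀ (by positivity) hdet2
      have h5 := (pow_right_injective₀ hq0 hq.ne') h4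
      exact Nat.eq_of_mul_eq_mul_left (by omega) h5
    have hsurj : Function.Surjective Φ :=
      (LinearMap.injective_iff_surjective_of_finrank_eq_finrank (by rw [hfr, hs])).1 hinj
    choose g hg using fun i => hsurj (Pi.single i (Φ v i))
    refine ⟨g, ?_, ?_⟩
    · apply hinj
      rw [map_sum]
      simp only [hg]
      exact (Finset.univ_sum_single (Φ v)).symm
    · intro i j hji
      have := hΦ (g i) j
      rw [hg, Pi.single_eq_of_ne hji] at this
      simp only [ZeroMemClass.coe_zero] at this
      exact (sub_eq_zero.1 this.symm)

lemma list_prod_restrict {W : Type*} [AddCommGroup W] [Module ℝ W] {n : ℕ}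
    (T : Fin n → Module.End ℝ W) (E : Submodule ℝ W) (h : ∀ i, ∀ x ∈ E, T i x ∈ E)
    (l : List (Fin n)) (x : E) :
    (((l.map (fun i => (T i).restrict (h i))).prod x : E) : W) = (l.map T).prod (x : W) := by
  induction l generalizing x with
  | nil => simp
  | cons a l ih => simp [ih]

/-- Spectral theorem for the opposition operator, in abstract form. -/
theorem abs_spec {W : Type*} [NormedAddCommGroup W] [InnerProductSpace ℝ W]
    [FiniteDimensional ℝ W]
    (n : ℕ) (q : ℝ) (hq : 1 < q) (T : Fin n → Module.End ℝ W)
    (hT : ∀ i x, T i (T i x) = (q - 1) • T i x + q • x)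
    (l : List (Fin n)) (hl : ∀ i, l.count i = n) (A : Module.End ℝ W)
    (hA : (l.map T).prod = A) (hsym : A.IsSymmetric) (hcomm : ∀ i x, T i (A x) = A (T i x))
    (hker : ∀ x, (∀ i, T i x = q • x) → x = 0) (hn : 1 ≤ n) :
    (∀ v : W, inner ℝ (A v) v ≤ q ^ (n * (n - 1)) * inner ℝ v v) ∧
    (∀ v : W, inner ℝ (A v) v = - q ^ (n * (n - 1)) * inner ℝ v v →
      A v = (- q ^ (n * (n - 1))) • v ∧
      ∃ g : Fin n → W, v = ∑ i, g i ∧ (∀ i, A (g i) = (- q ^ (n * (n - 1))) • g i) ∧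
        ∀ i j, j ≠ i → T j (g i) = q • g i) := by
  set K := q ^ (n * (n - 1)) with hK
  have hKpos : 0 < K := by positivity
  have hinv : ∀ lam : ℝ, ∀ i, ∀ x ∈ Module.End.eigenspace A lam,
      T i x ∈ Module.End.eigenspace A lam := by
    intro lam i x hx
    rw [Module.End.mem_eigenspace_iff] at hx ⊢
    rw [← hcomm, hx, map_smul]
  have hcore : ∀ lam : ℝ, ∀ v ∈ Module.End.eigenspace A lam, v ≠ 0 →
      |lam| ≤ K ∧ (|lam| = K → ∃ g : Fin n → W, v = ∑ i, g i ∧ (∀ i, A (g i) = lam • g i) ∧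
        ∀ i j, j ≠ i → T j (g i) = q • g i) := by
    intro lam v hv hv0
    let E := Module.End.eigenspace A lam
    have : Nontrivial E := ⟨⟨⟨v, hv⟩, 0, by
      intro h; exact hv0 (congrArg Subtype.val h)⟩⟩
    have := core (E := E) n q hq (fun i => (T i).restrict (hinv lam i))
      (by
        intro i x
        apply Subtype.ext
        exact hT i x) l hl lam
      (by
        intro x
        apply Subtype.ext
        rw [list_prod_restrict T E (hinv lam) l x, hA]
        exact Module.End.mem_eigenspace_iff.1 x.2)
      (by
        intro x hx
        apply Subtype.ext
        apply hker
        intro i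
        exact congrArg Subtype.val (hx i)) hn
    refine ⟨this.1, fun h => ?_⟩
    obtain ⟨g, hg1, hg2⟩ := this.2 h ⟨v, hv⟩
    refine ⟨fun i => (g i : W), ?_, ?_, ?_⟩
    · have := congrArg Subtype.val hg1
      simpa using this
    · intro i
      exact Module.End.mem_eigenspace_iff.1 (g i).2
    · intro i j hj
      exact congrArg Subtype.val (hg2 i j hj)
  set b := hsym.eigenvectorBasis rfl with hb
  set ev := hsym.eigenvalues rfl with hev
  have hbA : ∀ i, A (b i) = ev i • b i := fun i => hsym.apply_eigenvectorBasis rfl i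
  have hevK : ∀ i, |ev i| ≤ K := by
    intro i
    refine (hcore (ev i) (b i) ?_ ?_).1
    · rw [Module.End.mem_eigenspace_iff]; exact hbA i
    · exact b.orthonormal.ne_zero i
  have hin : ∀ v : W, inner ℝ v v = ∑ i, (inner ℝ (b i) v) ^ 2 := by
    intro v
    rw [← b.sum_inner_mul_inner v v]
    apply Finset.sum_congr rfl
    intro i _
    rw [real_inner_comm, sq]
  have hinA : ∀ v : W, inner ℝ (A v) v = ∑ i, ev i * (inner ℝ (b i) v) ^ 2 := by
    intro v
    rw [← b.sum_inner_mul_inner (A v) v]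
    apply Finset.sum_congr rfl
    intro i _
    rw [hsym v (b i), hbA, inner_smul_right, real_inner_comm v (b i)]
    ring
  constructor
  · intro v
    rw [hin, hinA, Finset.mul_sum]
    apply Finset.sum_le_sum
    intro i _
    exact mul_le_mul_of_nonneg_right (le_trans (le_abs_self _) (hevK i)) (sq_nonneg _)
  · intro v hv
    have hz : ∑ i, (ev i + K) * (inner ℝ (b i) v) ^ 2 = 0 := by
      have : ∑ i, (ev i + K) * (inner ℝ (b i) v) ^ 2
        = ∑ i, ev i * (inner ℝ (b i) v) ^ 2 + K * ∑ i, (inner ℝ (b i) v) ^ 2 := by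
        rw [Finset.mul_sum, ← Finset.sum_add_distrib]
        apply Finset.sum_congr rfl; intro i _; ring
      rw [this, ← hin, ← hinA, hv]; ring
    rw [Finset.sum_eq_zero_iff_of_nonneg (by
      intro i _
      have := (abs_le.1 (hevK i)).1
      exact mul_nonneg (by linarith) (sq_nonneg _))] at hz
    have hAv : A v = (-K) • v := by
      refine InnerProductSpace.ext_inner_left_basis b.toBasis (fun i => ?_)
      rw [b.coe_toBasis]
      rw [← hsym, hbA, inner_smul_left, inner_smul_right]
      simp only [conj_trivial]
      have := hz i (Finset.mem_univ i)
      rcases mul_eq_zero.1 this with h | h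
      · have : ev i = -K := by linarith
        rw [this]
      · have : inner ℝ (b i) v = 0 := by simpa using h
        rw [this]; ring
    refine ⟨hAv, ?_⟩
    by_cases hv0 : v = 0
    · refine ⟨fun _ => 0, by simp [hv0], by simp, by simp⟩
    · exact (hcore (-K) v (Module.End.mem_eigenspace_iff.2 hAv) hv0).2
        (by rw [abs_neg, abs_of_pos hKpos])

end PF

namespace PF

open Matrix in
theorem mat_spec {X : Type*} [Fintype X] (n : ℕ) (q : ℝ) (hq : 1 < q)
    (T : Fin n → Matrix X X ℝ)
    (hT : ∀ i, T i * T i = (q - 1) • T i + q • (1 : Matrix X X ℝ))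
    (hsum : ∀ i (v : X → ℝ), ∑ x, v x = 0 → ∑ x, (T i *ᵥ v) x = 0)
    (l : List (Fin n)) (hl : ∀ i, l.count i = n) (A : Matrix X X ℝ)
    (hA : (l.map T).prod = A) (hsym : A.IsHermitian) (hcomm : ∀ i, T i * A = A * T i)
    (hker : ∀ v : X → ℝ, ∑ x, v x = 0 → (∀ i, T i *ᵥ v = q • v) → v = 0) (hn : 1 ≤ n) :
    (∀ v : X → ℝ, ∑ x, v x = 0 → (A *ᵥ v) ⬝ᵥ v ≤ q ^ (n * (n - 1)) * (v ⬝ᵥ v)) ∧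
    (∀ v : X → ℝ, ∑ x, v x = 0 → (A *ᵥ v) ⬝ᵥ v = - q ^ (n * (n - 1)) * (v ⬝ᵥ v) →
      A *ᵥ v = (- q ^ (n * (n - 1))) • v ∧
      ∃ g : Fin n → X → ℝ, v = ∑ i, g i ∧ (∀ i, A *ᵥ (g i) = (- q ^ (n * (n - 1))) • g i) ∧
        ∀ i j, j ≠ i → T j *ᵥ (g i) = q • g i) := by
  let φ := fun v : EuclideanSpace ℝ X => ∑ x, v x
  let W : Submodule ℝ (EuclideanSpace ℝ X) :=
    { carrier := {v | ∑ x, v x = 0}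
      add_mem' := by
        intro a b ha hb
        simp only [Set.mem_ofPred_eq, PiLp.add_apply, Finset.sum_add_distrib] at *
        rw [ha, hb, add_zero]
      zero_mem' := by simp
      smul_mem' := by
        intro c a ha
        simp only [Set.mem_ofPred_eq, PiLp.smul_apply, smul_eq_mul, ← Finset.mul_sum] at *
        rw [ha, mul_zero] }
  have hWmem : ∀ v : EuclideanSpace ℝ X, v ∈ W ↔ ∑ x, v x = 0 := fun v => Iff.rfl
  let TE : Fin n → Module.End ℝ (EuclideanSpace ℝ X) := fun i => toLpLinAlgEquiv (R := ℝ) 2 (T i)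
  have hTE : ∀ i v x, (TE i v) x = (T i *ᵥ v.ofLp) x := fun i v x => rfl
  let AE : Module.End ℝ (EuclideanSpace ℝ X) := toLpLinAlgEquiv (R := ℝ) 2 A
  have hAE : ∀ v x, (AE v) x = (A *ᵥ v.ofLp) x := fun v x => rfl
  have hAE2 : (l.map TE).prod = AE := by
    simp only [AE, TE, ← hA, map_list_prod, List.map_map]
    rfl
  have hTW : ∀ i, ∀ v ∈ W, TE i v ∈ W := by
    intro i v hv
    exact hsum i v.ofLp hv
  have hprodW : ∀ l : List (Fin n), ∀ v ∈ W, (l.map TE).prod v ∈ W := by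
    intro l
    induction l with
    | nil => intro v hv; simpa using hv
    | cons a l ih =>
      intro v hv
      simpa using hTW a _ (ih v hv)
  have hAW : ∀ v ∈ W, AE v ∈ W := by
    intro v hv
    rw [← hAE2]; exact hprodW l v hv
  have hspec := abs_spec (W := W) n q hq (fun i => (TE i).restrict (hTW i))
    (by
      intro i v
      apply Subtype.ext
      have h2 : TE i * TE i = (q - 1) • TE i + q • 1 := by
        have := congrArg (toLpLinAlgEquiv (R := ℝ) 2) (hT i)
        rw [map_mul, map_add, map_smul, map_smul, map_one] at this
        exact this
      exact LinearMap.congr_fun h2 v) l hl (AE.restrict hAW)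
    (by
      apply LinearMap.ext
      intro v
      apply Subtype.ext
      rw [list_prod_restrict TE W hTW l v, hAE2]
      rfl)
    (by
      intro v w
      exact (isSymmetric_toEuclideanLin_iff.2 hsym) v w)
    (by
      intro i v
      apply Subtype.ext
      have h2 : TE i * AE = AE * TE i := by
        have := congrArg (toLpLinAlgEquiv (R := ℝ) 2) (hcomm i)
        rw [map_mul, map_mul] at this
        exact this
      exact LinearMap.congr_fun h2 v)
    (by
      intro v hv
      apply Subtype.ext
      have := hker v.1.ofLp v.2 (by
        intro i
        have h3 := congrArg Subtype.val (hv i)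
        ext x
        exact congrFun (congrArg WithLp.ofLp h3) x)
      ext x
      exact congrFun this x) hn
  have hinner : ∀ v w : EuclideanSpace ℝ X, inner ℝ v w = v.ofLp ⬝ᵥ w.ofLp := by
    intro v w
    rw [EuclideanSpace.inner_eq_star_dotProduct]
    simp [dotProduct_comm]
  constructor
  · intro v hv
    have := hspec.1 ⟨WithLp.toLp 2 v, hv⟩
    rw [Submodule.coe_inner, Submodule.coe_inner, hinner, hinner] at this
    exact this
  · intro v hv hv2
    obtain ⟨h1, g, h2, h3, h4⟩ := hspec.2 ⟨WithLp.toLp 2 v, hv⟩ (by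
      rw [Submodule.coe_inner, Submodule.coe_inner, hinner, hinner]
      exact hv2)
    refine ⟨?_, fun i => (g i).1.ofLp, ?_, ?_, ?_⟩
    · exact congrArg WithLp.ofLp (congrArg Subtype.val h1)
    · have := congrArg WithLp.ofLp (congrArg Subtype.val h2)
      simpa using this
    · intro i
      exact congrArg WithLp.ofLp (congrArg Subtype.val (h3 i))
    · intro i j hj
      exact congrArg WithLp.ofLp (congrArg Subtype.val (h4 i j hj))

end PF

namespace PF

/-- Adjacency matrix of the distinct and `r`-related relation. -/
noncomputable def adjM {X : Type*} (r : X → X → Prop) : Matrix X X ℝ :=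
  fun x y => if r x y ∧ x ≠ y then 1 else 0

/-- Zero-one matrix of a relation. -/
noncomputable def relM {X : Type*} (r : X → X → Prop) : Matrix X X ℝ :=
  fun x y => if r x y then 1 else 0

section combi
open Matrix

lemma relM_eq {X : Type*} [Fintype X] (r : X → X → Prop) (hr : Equivalence r) :
    adjM r = relM r - 1 := by
  ext x y
  by_cases h : x = y
  · subst h
    simp [adjM, relM, hr.refl]
  · simp [adjM, relM, h]

lemma relM_sq {X : Type*} [Fintype X] (r : X → X → Prop) (hr : Equivalence r) (k : ℕ)
    (hk : ∀ x, (Finset.univ.filter (fun y => r x y)).card = k) :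
    relM r * relM r = (k : ℝ) • relM r := by
  ext x y
  rw [Matrix.mul_apply, Matrix.smul_apply]
  simp only [relM, ← ite_and, mul_ite, mul_one, mul_zero, smul_eq_mul]
  by_cases h : r x y
  · have : ∀ z, (r z y ∧ r x z) ↔ r x z :=
      fun z => ⟨fun h1 => h1.2, fun h1 => ⟨hr.trans (hr.symm h1) h, h1⟩⟩
    simp only [this, h, if_true]
    rw [Finset.sum_boole, hk]
  · rw [if_neg h]
    apply Finset.sum_eq_zero
    intro z _
    rw [if_neg]
    rintro ⟨h1, h2⟩
    exact h (hr.trans h2 h1)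

lemma adjM_sq {X : Type*} [Fintype X] (r : X → X → Prop) (hr : Equivalence r) (q : ℕ)
    (hk : ∀ x, (Finset.univ.filter (fun y => r x y)).card = q + 1) :
    adjM r * adjM r = ((q : ℝ) - 1) • adjM r + (q : ℝ) • (1 : Matrix X X ℝ) := by
  rw [relM_eq r hr, sub_mul, mul_sub, relM_sq r hr (q + 1) hk]
  push_cast
  simp only [mul_one, one_mul]
  module

lemma relM_mulVec {X : Type*} [Fintype X] (r : X → X → Prop) (v : X → ℝ) (x : X) :
    (relM r *ᵥ v) x = ∑ y ∈ Finset.univ.filter (fun y => r x y), v y := by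
  rw [Matrix.mulVec, dotProduct, Finset.sum_filter]
  simp [relM]

/-- `ℓ¹` norm. -/
noncomputable def l1 {X : Type*} [Fintype X] (v : X → ℝ) : ℝ := ∑ x, |v x|

lemma l1_add_le {X : Type*} [Fintype X] (v w : X → ℝ) : l1 (v + w) ≤ l1 v + l1 w := by
  unfold l1
  rw [← Finset.sum_add_distrib]
  exact Finset.sum_le_sum (fun x _ => abs_add_le _ _)

lemma l1_smul {X : Type*} [Fintype X] (c : ℝ) (v : X → ℝ) : l1 (c • v) = |c| * l1 v := by
  unfold l1
  rw [Finset.mul_sum]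
  simp [abs_mul]

lemma adjM_nonneg {X : Type*} (r : X → X → Prop) (x y : X) : 0 ≤ adjM r x y := by
  unfold adjM; split_ifs <;> norm_num

lemma adjM_symm {X : Type*} (r : X → X → Prop) (hr : Equivalence r) (x y : X) :
    adjM r x y = adjM r y x := by
  unfold adjM
  have : (r x y ∧ x ≠ y) ↔ (r y x ∧ y ≠ x) :=
    ⟨fun h => ⟨hr.symm h.1, h.2.symm⟩, fun h => ⟨hr.symm h.1, h.2.symm⟩⟩
  simp only [this]

lemma adjM_row {X : Type*} [Fintype X] (r : X → X → Prop) (hr : Equivalence r) (q : ℕ)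
    (hk : ∀ x, (Finset.univ.filter (fun y => r x y)).card = q + 1) (x : X) :
    ∑ y, adjM r x y = q := by
  have h1 : ∀ y, adjM r x y = relM r x y - (1 : Matrix X X ℝ) x y := by
    intro y; rw [relM_eq r hr]; rfl
  simp only [h1, Finset.sum_sub_distrib]
  have h2 : ∑ y, relM r x y = q + 1 := by
    simp only [relM, Finset.sum_boole, hk]; push_cast; rfl
  rw [h2]
  simp [Matrix.one_apply]

lemma adjM_col {X : Type*} [Fintype X] (r : X → X → Prop) (hr : Equivalence r) (q : ℕ)
    (hk : ∀ x, (Finset.univ.filter (fun y => r x y)).card = q + 1) (x : X) :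
    ∑ y, adjM r y x = q := by
  rw [← adjM_row r hr q hk x]
  exact Finset.sum_congr rfl (fun y _ => adjM_symm r hr y x)

lemma l1_adjM {X : Type*} [Fintype X] (r : X → X → Prop) (hr : Equivalence r) (q : ℕ)
    (hk : ∀ x, (Finset.univ.filter (fun y => r x y)).card = q + 1) (v : X → ℝ) :
    l1 (adjM r *ᵥ v) ≤ q * l1 v := by
  unfold l1
  calc ∑ x, |(adjM r *ᵥ v) x| ≤ ∑ x, ∑ y, adjM r x y * |v y| := by
        apply Finset.sum_le_sum
        intro x _
        rw [Matrix.mulVec, dotProduct]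
        refine (Finset.abs_sum_le_sum_abs _ _).trans (le_of_eq ?_)
        apply Finset.sum_congr rfl
        intro y _
        rw [abs_mul, abs_of_nonneg (adjM_nonneg r x y)]
    _ = ∑ y, (∑ x, adjM r x y) * |v y| := by
        rw [Finset.sum_comm]
        simp only [Finset.sum_mul]
    _ = q * ∑ y, |v y| := by
        simp only [adjM_col r hr q hk, Finset.mul_sum]

lemma l1_word {X : Type*} [Fintype X] {n : ℕ} (adj : Fin n → X → X → Prop)
    (hadj : ∀ i, Equivalence (adj i)) (q : ℕ) (hq : 0 < q)
    (hk : ∀ i x, (Finset.univ.filter (fun y => adj i x y)).card = q + 1) (u : X → ℝ) (c : ℝ)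
    (hu : ∀ i, l1 ((q : ℝ) • u - adjM (adj i) *ᵥ u) ≤ c) (l : List (Fin n)) :
    q * l1 ((q : ℝ) ^ l.length • u - (l.map (fun i => adjM (adj i))).prod *ᵥ u)
      ≤ l.length * q ^ l.length * c := by
  have hq' : (0 : ℝ) < q := by exact_mod_cast hq
  induction l with
  | nil => simp [l1]
  | cons a l ih =>
    set P := (l.map (fun i => adjM (adj i))).prod with hP
    have heq : (q : ℝ) ^ (a :: l).length • u - ((a :: l).map (fun i => adjM (adj i))).prod *ᵥ u
        = (q : ℝ) ^ l.length • ((q : ℝ) • u - adjM (adj a) *ᵥ u)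
          + adjM (adj a) *ᵥ ((q : ℝ) ^ l.length • u - P *ᵥ u) := by
      rw [List.map_cons, List.prod_cons, List.length_cons, ← Matrix.mulVec_mulVec, ← hP,
        Matrix.mulVec_sub, Matrix.mulVec_smul, pow_succ]
      module
    rw [heq]
    have h1 := l1_add_le ((q : ℝ) ^ l.length • ((q : ℝ) • u - adjM (adj a) *ᵥ u))
      (adjM (adj a) *ᵥ ((q : ℝ) ^ l.length • u - P *ᵥ u))
    rw [l1_smul, abs_of_pos (by positivity)] at h1
    have h2 := l1_adjM (adj a) (hadj a) q (hk a) ((q : ℝ) ^ l.length • u - P *ᵥ u)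
    have h3 : (q : ℝ) ^ l.length * l1 ((q : ℝ) • u - adjM (adj a) *ᵥ u) ≤ q ^ l.length * c :=
      mul_le_mul_of_nonneg_left (hu a) (by positivity)
    rw [List.length_cons]
    push_cast
    calc (q : ℝ) * _ ≤ q * (q ^ l.length * c + l.length * q ^ l.length * c) := by
          apply mul_le_mul_of_nonneg_left _ hq'.le
          linarith
      _ = _ := by ring

/-- a vector with `T v = q v` is constant on classes. -/
lemma const_of_eig {X : Type*} [Fintype X] (r : X → X → Prop) (hr : Equivalence r) (q : ℕ)
    (v : X → ℝ) (hv : adjM r *ᵥ v = (q : ℝ) • v) (x y : X) (hxy : r x y) : v x = v y := by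
  have h1 : relM r *ᵥ v = ((q : ℝ) + 1) • v := by
    have : relM r = adjM r + 1 := by rw [relM_eq r hr]; abel
    rw [this, Matrix.add_mulVec, hv, Matrix.one_mulVec]; module
  have h2 : (relM r *ᵥ v) x = (relM r *ᵥ v) y := by
    rw [relM_mulVec, relM_mulVec]
    congr 1
    ext z
    simp only [Finset.mem_filter, Finset.mem_univ, true_and]
    exact ⟨fun h => hr.trans (hr.symm hxy) h, fun h => hr.trans hxy h⟩
  rw [h1] at h2
  simp only [Pi.smul_apply, smul_eq_mul] at h2
  exact mul_left_cancel₀ (by positivity) h2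

end combi

end PF

namespace PF

/-- The combinatorial data of the chamber system used in the proof. -/
structure CS (X : Type*) [Fintype X] (n q : ℕ) where
  adj : Fin n → X → X → Prop
  opp : X → X → Prop
  hadj : ∀ i, Equivalence (adj i)
  hk : ∀ i x, (Finset.univ.filter (fun y => adj i x y)).card = q + 1
  hsymm : ∀ x y, opp x y → opp y x
  hcom : ∀ i, adjM (adj i) * relM opp = relM opp * adjM (adj i)
  hstar : ∀ i x y, opp x y → ∃ z, ∀ y', adj i y y' → y' ≠ z → opp x y'
  l : List (Fin n)
  hl : ∀ i, l.count i = n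
  hword : (l.map (fun i => adjM (adj i))).prod = relM opp
  hconn : ∀ h : X → ℝ, (∀ i x y, adj i x y → h x = h y) → ∀ x y, h x = h y

section combi2
open Matrix

variable {X : Type*} [Fintype X] {n q : ℕ}

lemma CS.length (S : CS X n q) : S.l.length = n * n := by
  have h : ∀ l : List (Fin n), l.length = ∑ i, l.count i := by
    intro l
    induction l with
    | nil => simp
    | cons a l ih =>
      simp only [List.length_cons, List.count_cons, Finset.sum_add_distrib, ih]
      simp
  rw [h]
  simp [S.hl]

lemma CS.adj_one (S : CS X n q) (i : Fin n) :
    adjM (S.adj i) *ᵥ (fun _ => (1 : ℝ)) = (q : ℝ) • (fun _ => (1 : ℝ)) := by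
  ext x
  rw [Matrix.mulVec, dotProduct]
  simp [adjM_row (S.adj i) (S.hadj i) q (S.hk i) x]

lemma CS.opp_one (S : CS X n q) :
    relM S.opp *ᵥ (fun _ => (1 : ℝ)) = ((q : ℝ) ^ (n * n)) • (fun _ => (1 : ℝ)) := by
  rw [← S.hword, ← S.length]
  generalize S.l = l
  induction l with
  | nil => simp
  | cons a l ih =>
    rw [List.map_cons, List.prod_cons, ← Matrix.mulVec_mulVec, ih, Matrix.mulVec_smul,
      S.adj_one, List.length_cons, pow_succ, smul_smul]

lemma CS.herm (S : CS X n q) : (relM S.opp).IsHermitian := by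
  ext x y
  have : S.opp y x ↔ S.opp x y := ⟨S.hsymm _ _, S.hsymm _ _⟩
  simp [Matrix.conjTranspose_apply, relM, this]

lemma CS.spec (S : CS X n q) (hn : 1 ≤ n) (hq : 1 < q) :
    (∀ v : X → ℝ, ∑ x, v x = 0 →
      (relM S.opp *ᵥ v) ⬝ᵥ v ≤ (q : ℝ) ^ (n * (n - 1)) * (v ⬝ᵥ v)) ∧
    (∀ v : X → ℝ, ∑ x, v x = 0 → (relM S.opp *ᵥ v) ⬝ᵥ v = -(q : ℝ) ^ (n * (n - 1)) * (v ⬝ᵥ v) →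
      relM S.opp *ᵥ v = (-(q : ℝ) ^ (n * (n - 1))) • v ∧ ∃ g : Fin n → X → ℝ, v = ∑ i, g i ∧
      (∀ i, relM S.opp *ᵥ g i = (-(q : ℝ) ^ (n * (n - 1))) • g i) ∧
      ∀ i j, j ≠ i → adjM (S.adj j) *ᵥ g i = (q : ℝ) • g i) :=
  mat_spec n (q : ℝ) (by exact_mod_cast hq) (fun i => adjM (S.adj i))
    (fun i => adjM_sq _ (S.hadj i) q (S.hk i))
    (by
      intro i v hv
      simp only [Matrix.mulVec, dotProduct]
      rw [Finset.sum_comm]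
      simp only [← Finset.sum_mul, adjM_col _ (S.hadj i) q (S.hk i)]
      rw [← Finset.mul_sum, hv, mul_zero])
    S.l S.hl (relM S.opp) S.hword S.herm S.hcom
    (by
      intro v hv h
      have h1 := S.hconn v (fun i x y hxy => const_of_eig _ (S.hadj i) q v (h i) x y hxy)
      ext x
      have h2 : ∑ y, v y = Fintype.card X * v x := by
        rw [Finset.sum_congr rfl (fun y _ => h1 y x)]
        simp
      rw [hv] at h2
      have : (Fintype.card X : ℝ) ≠ 0 := by
        have : Nonempty X := ⟨x⟩
        simp
      rcases mul_eq_zero.1 h2.symm with h3 | h3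
      · exact absurd h3 this
      · exact h3)
    hn

lemma CS.quad (S : CS X n q) (u : X → ℝ) (c : ℝ) :
    (relM S.opp *ᵥ (u - c • (fun _ => (1 : ℝ)))) ⬝ᵥ (u - c • (fun _ => (1 : ℝ)))
      = (relM S.opp *ᵥ u) ⬝ᵥ u - 2 * c * q ^ (n * n) * ∑ x, u x
        + c ^ 2 * q ^ (n * n) * Fintype.card X := by
  have h1 : (relM S.opp *ᵥ u) ⬝ᵥ (fun _ => (1 : ℝ)) = q ^ (n * n) * ∑ x, u x := by
    have : (relM S.opp)ᵀ = relM S.opp := by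
      have := S.herm
      rwa [Matrix.IsHermitian, Matrix.conjTranspose_eq_transpose_of_trivial] at this
    rw [dotProduct_comm, Matrix.dotProduct_mulVec, ← Matrix.mulVec_transpose, this, S.opp_one]
    simp [dotProduct, Finset.mul_sum]
  rw [Matrix.mulVec_sub, Matrix.mulVec_smul, S.opp_one]
  simp only [sub_dotProduct, dotProduct_sub, smul_dotProduct, dotProduct_smul, h1, smul_eq_mul]
  have h2 : (fun _ => (1 : ℝ)) ⬝ᵥ u = ∑ x, u x := by simp [dotProduct]
  have h3 : (fun _ : X => (1 : ℝ)) ⬝ᵥ (fun _ => (1 : ℝ)) = Fintype.card X := by simp [dotProduct]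
  rw [h2, h3]
  ring

lemma norm_shift (u : X → ℝ) (c : ℝ) :
    (u - c • (fun _ => (1 : ℝ))) ⬝ᵥ (u - c • (fun _ => (1 : ℝ)))
      = u ⬝ᵥ u - 2 * c * ∑ x, u x + c ^ 2 * Fintype.card X := by
  simp only [sub_dotProduct, dotProduct_sub, smul_dotProduct, dotProduct_smul, smul_eq_mul]
  simp [dotProduct]
  ring

/-- zero-one indicator. -/
noncomputable def ind (Y : Set X) : X → ℝ := fun x => if x ∈ Y then 1 else 0

lemma ind_sum (Y : Set X) : ∑ x, ind Y x = (Y.ncard : ℝ) := by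
  simp only [ind, Finset.sum_boole]
  congr 1
  rw [Set.ncard_eq_toFinset_card']
  congr 1
  ext x; simp

lemma ind_sq (Y : Set X) : ind Y ⬝ᵥ ind Y = (Y.ncard : ℝ) := by
  rw [← ind_sum, dotProduct]
  apply Finset.sum_congr rfl
  intro x _
  unfold ind; split_ifs <;> simp

lemma CS.l1_ind (S : CS X n q) (Y : Set X) (i : Fin n)
    (hY : ∀ y ∈ Y, ∃ z0, ∀ z, S.adj i y z → z ≠ z0 → z ∈ Y) :
    l1 ((q : ℝ) • ind Y - adjM (S.adj i) *ᵥ ind Y) ≤ 2 * Y.ncard := by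
  set w := (q : ℝ) • ind Y - adjM (S.adj i) *ᵥ ind Y with hw
  have hw0 : ∀ x, w x = q * ind Y x - ∑ y, adjM (S.adj i) x y * ind Y y := by
    intro x; rfl
  have hsum : ∑ x, w x = 0 := by
    simp only [hw0, Finset.sum_sub_distrib]
    rw [Finset.sum_comm]
    simp only [← Finset.sum_mul, adjM_col _ (S.hadj i) q (S.hk i), ← Finset.mul_sum]
    ring
  have hind : ∀ x, 0 ≤ ind Y x := by intro x; unfold ind; split_ifs <;> norm_num
  have hle : ∀ x, w x ≤ ind Y x := by
    intro x
    by_cases hx : x ∈ Y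
    · obtain ⟨z0, hz0⟩ := hY x hx
      have : w x = ∑ y, adjM (S.adj i) x y * (1 - ind Y y) := by
        simp only [mul_sub, Finset.sum_sub_distrib, mul_one,
          adjM_row _ (S.hadj i) q (S.hk i), hw0]
        simp [ind, hx]
      rw [this]
      have h1 : ind Y x = ∑ y, if y = z0 then (1 : ℝ) else 0 := by simp [ind, hx]
      rw [h1]
      apply Finset.sum_le_sum
      intro y _
      by_cases hy : y = z0
      · simp only [hy, if_true, adjM, ind]
        split_ifs <;> norm_num
      · simp only [hy, if_false]
        by_cases ha : S.adj i x y
        · simp [ind, hz0 y ha hy]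
        · simp [adjM, ha]
    · rw [hw0]
      have : 0 ≤ ∑ y, adjM (S.adj i) x y * ind Y y :=
        Finset.sum_nonneg (fun y _ => mul_nonneg (adjM_nonneg _ _ _) (hind y))
      have h0 : ind Y x = 0 := by simp [ind, hx]
      rw [h0]; linarith
  calc l1 w ≤ ∑ x, (2 * ind Y x - w x) := by
        unfold l1
        apply Finset.sum_le_sum
        intro x _
        rw [abs_le]
        constructor <;> linarith [hle x, hind x]
    _ = 2 * Y.ncard := by
        rw [Finset.sum_sub_distrib, hsum, ← Finset.mul_sum, ind_sum]; ring

lemma CS.expand (S : CS X n q) (hn : 1 ≤ n) (hq : 8 * n * n < q) (Y : Set X)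
    (hne : Y.Nonempty)
    (hY : ∀ i, ∀ y ∈ Y, ∃ z0, ∀ z, S.adj i y z → z ≠ z0 → z ∈ Y) :
    (Fintype.card X : ℝ) < 2 * Y.ncard := by
  have hnn : 1 ≤ n * n := Nat.mul_pos hn hn
  have hq1 : 8 < q := by
    have : 8 * n * n = 8 * (n * n) := by ring
    omega
  have h1 := l1_word S.adj S.hadj q (by omega) S.hk (ind Y) (2 * Y.ncard)
    (fun i => S.l1_ind Y i (hY i)) S.l
  rw [S.length, S.hword] at h1
  set m : ℝ := (Y.ncard : ℝ) with hm
  set N : ℝ := (Fintype.card X : ℝ) with hN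
  set Q : ℝ := (q : ℝ) ^ (n * n) with hQ
  set K : ℝ := (q : ℝ) ^ (n * (n - 1)) with hK
  have hm0 : 0 < m := by
    rw [hm]; exact_mod_cast (Set.ncard_pos (Set.toFinite Y)).2 hne
  have hN0 : 0 < N := by
    obtain ⟨y, _⟩ := hne
    have : Nonempty X := ⟨y⟩
    rw [hN]; exact_mod_cast Fintype.card_pos
  have hq0 : (0 : ℝ) < q := by positivity
  have hQ0 : 0 < Q := by positivity
  have hK0 : 0 < K := by positivity
  have hQK : Q = K * q ^ n := by
    rw [hQ, hK, ← pow_add]; congr 1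
    obtain ⟨k, rfl⟩ : ∃ k, n = k + 1 := ⟨n - 1, by omega⟩
    simp only [Nat.add_sub_cancel]
    ring
  have hqn : (2 : ℝ) ≤ q ^ n := by
    have : (q : ℝ) ^ 1 ≤ q ^ n := pow_le_pow_right₀ (by exact_mod_cast (by omega : 1 ≤ q)) hn
    have h8 : (8 : ℝ) < q := by exact_mod_cast hq1
    rw [pow_one] at this; linarith
  have hKQ : 2 * K ≤ Q := by rw [hQK]; nlinarith
  -- upper bound
  set a : ℝ := (relM S.opp *ᵥ ind Y) ⬝ᵥ ind Y with ha
  have h2 : Q * m - a ≤ l1 (Q • ind Y - relM S.opp *ᵥ ind Y) := by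
    have : Q * m - a = ∑ x, (Q • ind Y - relM S.opp *ᵥ ind Y) x * ind Y x := by
      rw [hm, ← ind_sq, ha]
      have := sub_dotProduct (Q • ind Y) (relM S.opp *ᵥ ind Y) (ind Y)
      rw [smul_dotProduct, smul_eq_mul] at this
      rw [← this]; rfl
    rw [this, l1]
    apply Finset.sum_le_sum
    intro x _
    unfold ind
    split_ifs
    · rw [mul_one]; exact le_abs_self _
    · rw [mul_zero]; exact abs_nonneg _
  have h3 := (S.spec hn (by omega)).1 (ind Y - (m / N) • (fun _ => (1 : ℝ))) (by
    simp only [Pi.sub_apply, Pi.smul_apply, Finset.sum_sub_distrib, ind_sum]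
    simp only [smul_eq_mul, mul_one, Finset.sum_const, Finset.card_univ, nsmul_eq_mul]
    rw [← hm, ← hN]
    field_simp
    ring)
  rw [S.quad, norm_shift, ind_sq, ind_sum, ← hm, ← hN, ← ha, ← hQ, ← hK] at h3
  have h4 : a - Q * (m ^ 2 / N) ≤ K * (m - m ^ 2 / N) := by
    have e1 : a - 2 * (m / N) * Q * m + (m / N) ^ 2 * Q * N = a - Q * (m ^ 2 / N) := by
      field_simp; ring
    have e2 : m - 2 * (m / N) * m + (m / N) ^ 2 * N = m - m ^ 2 / N := by
      field_simp; ring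
    rwa [e1, e2] at h3
  by_contra hcon
  push Not at hcon
  have hr : m ^ 2 / N ≤ m / 2 := by
    rw [div_le_div_iff₀ hN0 (by norm_num)]
    nlinarith
  -- combine
  have h5 : (Q - K) * (m - m ^ 2 / N) ≤ Q * m - a := by nlinarith
  have h6 : Q / 2 * (m / 2) ≤ (Q - K) * (m - m ^ 2 / N) := by
    apply mul_le_mul <;> linarith
  have h7 : q * (Q / 2 * (m / 2)) ≤ ((n * n : ℕ) : ℝ) * Q * (2 * m) :=
    (mul_le_mul_of_nonneg_left ((h6.trans h5).trans h2) hq0.le).trans h1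
  have h8 : (q : ℝ) ≤ 8 * ((n * n : ℕ) : ℝ) := by
    have hQm : 0 < Q * m := by positivity
    nlinarith
  have h9 : q ≤ 8 * (n * n) := by exact_mod_cast h8
  rw [← mul_assoc] at h9
  omega

theorem CS.main (S : CS X n q) (hn : 1 ≤ n) (hq : 8 * n * n < q) (𝓕 : Set X)
    (hEKR : ∀ x ∈ 𝓕, ∀ y ∈ 𝓕, ¬ S.opp x y)
    (hcard : (𝓕.ncard : ℝ) = (Fintype.card X : ℝ) / ((q : ℝ) ^ n + 1)) :
    ∃ s : Fin n, ∀ j, j ≠ s → ∀ x y, S.adj j x y → x ∈ 𝓕 → y ∈ 𝓕 := by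
  have hnn : 1 ≤ n * n := Nat.mul_pos hn hn
  have hq1 : 8 < q := by
    have : 8 * n * n = 8 * (n * n) := by ring
    omega
  by_cases hX : IsEmpty X
  · exact ⟨⟨0, hn⟩, fun j _ x => (hX.false x).elim⟩
  have hX' : Nonempty X := not_isEmpty_iff.1 hX
  have hq0 : (0 : ℝ) < q := by positivity
  set N : ℝ := (Fintype.card X : ℝ) with hN
  have hN0 : 0 < N := by rw [hN]; exact_mod_cast Fintype.card_pos
  set Q : ℝ := (q : ℝ) ^ (n * n) with hQ
  set K : ℝ := (q : ℝ) ^ (n * (n - 1)) with hK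
  have hQ0 : 0 < Q := by positivity
  have hK0 : 0 < K := by positivity
  set t : ℝ := (q : ℝ) ^ n with ht
  have ht0 : 0 < t := by positivity
  have hQK : Q = K * t := by
    rw [hQ, hK, ht, ← pow_add]; congr 1
    obtain ⟨k, rfl⟩ : ∃ k, n = k + 1 := ⟨n - 1, by omega⟩
    simp only [Nat.add_sub_cancel]
    ring
  set f := ind 𝓕 with hf
  set μ : ℝ := 1 / (t + 1) with hμ
  set v := f - μ • (fun _ => (1 : ℝ)) with hv
  have hfs : ∑ x, f x = N * μ := by rw [hf, ind_sum, hcard, hμ]; ring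
  have hff : f ⬝ᵥ f = N * μ := by rw [hf, ind_sq, hcard, hμ]; ring
  have hvs : ∑ x, v x = 0 := by
    simp only [hv, Pi.sub_apply, Pi.smul_apply, Finset.sum_sub_distrib, hfs]
    simp only [smul_eq_mul, mul_one, Finset.sum_const, Finset.card_univ, nsmul_eq_mul]
    rw [← hN]; ring
  have hAff : (relM S.opp *ᵥ f) ⬝ᵥ f = 0 := by
    rw [dotProduct]
    apply Finset.sum_eq_zero
    intro x _
    by_cases hx : x ∈ 𝓕
    · have : (relM S.opp *ᵥ f) x = 0 := by
        rw [relM_mulVec]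
        apply Finset.sum_eq_zero
        intro y hy
        rw [Finset.mem_filter] at hy
        have : y ∉ 𝓕 := fun hy' => hEKR x hx y hy' hy.2
        simp [hf, ind, this]
      rw [this, zero_mul]
    · simp [hf, ind, hx]
  have hμ1 : μ * (t + 1) = 1 := by rw [hμ]; field_simp
  have hquad : (relM S.opp *ᵥ v) ⬝ᵥ v = -K * (v ⬝ᵥ v) := by
    rw [hv, S.quad, norm_shift, hAff, hfs, hff, ← hQ, ← hN, hQK]
    have : t * μ = 1 - μ := by linarith
    have e1 : 0 - 2 * μ * (K * t) * (N * μ) + μ ^ 2 * (K * t) * N = - K * N * μ * (t * μ) := by ring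
    rw [e1, this]; ring
  obtain ⟨hAv, g, hvg, hAg, hTg⟩ := (S.spec hn (by omega)).2 v hvs hquad
  rw [← hK] at hAv hAg
  -- constancy
  have hgc : ∀ i j, j ≠ i → ∀ x y, S.adj j x y → g i x = g i y := by
    intro i j hji x y hxy
    exact const_of_eig _ (S.hadj j) q (g i) (hTg i j hji) x y hxy
  have hsumg : ∀ x, f x - μ = ∑ i, g i x := by
    intro x
    have := congrFun hvg x
    simp only [hv, Pi.sub_apply, Pi.smul_apply, Finset.sum_apply, smul_eq_mul, mul_one] at this
    exact this
  -- every outside chamber is opposite to a member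
  have hout : ∀ x, x ∉ 𝓕 → ∃ y ∈ 𝓕, S.opp y x := by
    intro x hx
    by_contra hcon
    push Not at hcon
    have h1 : (relM S.opp *ᵥ f) x = 0 := by
      rw [relM_mulVec]
      apply Finset.sum_eq_zero
      intro y hy
      rw [Finset.mem_filter] at hy
      have : y ∉ 𝓕 := fun hy' => hcon y hy' (S.hsymm _ _ hy.2)
      simp [hf, ind, this]
    have h2 := congrFun hAv x
    rw [hv, Matrix.mulVec_sub, Matrix.mulVec_smul, S.opp_one, ← hQ] at h2
    simp only [Pi.sub_apply, Pi.smul_apply, smul_eq_mul, mul_one, h1] at h2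
    have h3 : f x = 0 := by simp [hf, ind, hx]
    rw [h3] at h2
    have hμ0 : 0 < μ := by rw [hμ]; positivity
    have : 0 < K * μ := by positivity
    have : 0 < μ * Q := by positivity
    linarith
  -- level sets are large
  have hlev : ∀ s a, (∃ x, x ∉ 𝓕 ∧ g s x = a) →
      N < 2 * (({x | x ∉ 𝓕 ∧ g s x = a} : Set X).ncard : ℝ) := by
    intro s a ⟨x0, hx0⟩
    apply S.expand hn hq _ ⟨x0, hx0⟩
    intro i y hy
    rw [Set.mem_ofPred_eq] at hy
    obtain ⟨c, hc, hcy⟩ := hout y hy.1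
    obtain ⟨z0, hz0⟩ := S.hstar i c y hcy
    refine ⟨z0, fun z hyz hz => ?_⟩
    have hcz := hz0 z hyz hz
    have hzF : z ∉ 𝓕 := fun h => hEKR c hc z h hcz
    refine ⟨hzF, ?_⟩
    rw [← hy.2]
    by_cases his : i = s
    · subst his
      have e1 := hsumg y
      have e2 := hsumg z
      have e3 : f y = f z := by simp [hf, ind, hy.1, hzF]
      rw [← Finset.add_sum_erase _ _ (Finset.mem_univ i)] at e1 e2
      have e4 : ∑ j ∈ Finset.univ.erase i, g j y = ∑ j ∈ Finset.univ.erase i, g j z := by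
        apply Finset.sum_congr rfl
        intro j hj
        exact hgc j i (Finset.ne_of_mem_erase hj).symm y z hyz
      linarith
    · exact (hgc s i his y z hyz).symm
  have hconst : ∀ s x y, x ∉ 𝓕 → y ∉ 𝓕 → g s x = g s y := by
    intro s x y hx hy
    by_contra hne
    have h1 := hlev s (g s x) ⟨x, hx, rfl⟩
    have h2 := hlev s (g s y) ⟨y, hy, rfl⟩
    have hd : Disjoint ({z | z ∉ 𝓕 ∧ g s z = g s x} : Set X) {z | z ∉ 𝓕 ∧ g s z = g s y} := by
      rw [Set.disjoint_left]
      intro z hz1 hz2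
      exact hne (hz1.2.symm.trans hz2.2)
    have h3 := Set.ncard_union_eq hd (Set.toFinite _) (Set.toFinite _)
    have h4 : (({z | z ∉ 𝓕 ∧ g s z = g s x} ∪ {z | z ∉ 𝓕 ∧ g s z = g s y} : Set X)).ncard
        ≤ Fintype.card X := by
      rw [← Nat.card_eq_fintype_card]
      exact Set.ncard_le_card _
    rw [h3] at h4
    have h5 : ((({z | z ∉ 𝓕 ∧ g s z = g s x} : Set X).ncard : ℝ)
      + (({z | z ∉ 𝓕 ∧ g s z = g s y} : Set X).ncard : ℝ)) ≤ N := by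
      rw [hN]; exact_mod_cast h4
    linarith
  -- an outside chamber exists
  obtain ⟨x0, hx0⟩ : ∃ x, x ∉ 𝓕 := by
    by_contra hcon
    push Not at hcon
    have : 𝓕 = Set.univ := Set.eq_univ_of_forall hcon
    rw [this, Set.ncard_univ, Nat.card_eq_fintype_card, ← hN] at hcard
    rw [eq_div_iff (by positivity)] at hcard
    have : 0 < N * t := by positivity
    linarith
  have hin : ∀ s x, x ∈ 𝓕 → g s x = - t * g s x0 := by
    intro s x hx
    have h1 := congrFun (hAg s) x
    have h2 : (relM S.opp *ᵥ g s) x = g s x0 * (relM S.opp *ᵥ (fun _ => (1 : ℝ))) x := by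
      rw [relM_mulVec, relM_mulVec, Finset.mul_sum]
      apply Finset.sum_congr rfl
      intro y hy
      rw [Finset.mem_filter] at hy
      rw [mul_one]
      exact hconst s y x0 (fun h => hEKR x hx y h hy.2) hx0
    rw [h2, S.opp_one, ← hQ, hQK] at h1
    simp only [Pi.smul_apply, smul_eq_mul, mul_one] at h1
    have : K * (g s x + t * g s x0) = 0 := by linarith
    rcases mul_eq_zero.1 this with h | h
    · linarith
    · linarith
  obtain ⟨s, hs⟩ : ∃ s, g s x0 ≠ 0 := by
    by_contra hcon
    push Not at hcon
    have h1 := hsumg x0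
    rw [Finset.sum_eq_zero (fun i _ => hcon i)] at h1
    have h3 : f x0 = 0 := by simp [hf, ind, hx0]
    have hμ0 : 0 < μ := by rw [hμ]; positivity
    linarith
  refine ⟨s, fun j hj x y hxy hx => ?_⟩
  by_contra hy
  have h1 := hgc s j hj x y hxy
  rw [hin s x hx, hconst s y x0 hy hx0] at h1
  have : (t + 1) * g s x0 = 0 := by linarith
  rcases mul_eq_zero.1 this with h | h
  · linarith
  · exact hs h

end combi2
end PF

namespace PF
section geom

variable {F V : Type} [Field F] [AddCommGroup V] [Module F V]

/-- Standing hypotheses on the form. -/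
structure Symp (B : V →ₗ[F] V →ₗ[F] F) (n : ℕ) : Prop where
  alt : IsAltForm B
  nondeg : NondegForm B
  fin : FiniteDimensional F V
  dim : Module.finrank F V = 2 * n
  pos : 1 ≤ n

variable {B : V →ₗ[F] V →ₗ[F] F} {n : ℕ}

lemma mem_bperp {W : Submodule F V} {x : V} : x ∈ bperp B W ↔ ∀ w ∈ W, B w x = 0 := by
  simp [bperp, Submodule.mem_iInf]

lemma Symp.skew (h : Symp B n) (x y : V) : B x y = - B y x := by
  have h1 := h.alt (x + y)
  simp only [map_add, LinearMap.add_apply, h.alt x, h.alt y, zero_add, add_zero] at h1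
  exact eq_neg_of_add_eq_zero_right h1

lemma Symp.comm (h : Symp B n) {x y : V} (hxy : B x y = 0) : B y x = 0 := by
  rw [h.skew, hxy, neg_zero]

lemma bperp_anti {U W : Submodule F V} (hUW : U ≤ W) : bperp B W ≤ bperp B U := by
  intro x hx
  rw [mem_bperp] at hx ⊢
  exact fun w hw => hx w (hUW hw)

lemma Symp.le_bb (h : Symp B n) (W : Submodule F V) : W ≤ bperp B (bperp B W) := by
  intro x hx
  rw [mem_bperp]
  intro w hw
  rw [mem_bperp] at hw
  exact h.comm (hw x hx)

lemma Symp.finrank_bperp (h : Symp B n) (W : Submodule F V) :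
    finrank F (bperp B W) + finrank F W = 2 * n := by
  have := h.fin
  have e : bperp B W = LinearMap.BilinForm.orthogonal B W := by
    ext x
    rw [mem_bperp, LinearMap.BilinForm.mem_orthogonal_iff]
  have hr : LinearMap.BilinForm.IsRefl B := fun x y hxy => h.comm hxy
  have hnd : LinearMap.BilinForm.Nondegenerate B := by
    refine ⟨fun x hx => h.nondeg x hx, fun x hx => h.nondeg x (fun w => h.comm (hx w))⟩
  have h1 := LinearMap.BilinForm.finrank_orthogonal hnd W
  have h2 := Submodule.finrank_le W
  rw [e, h1, ← h.dim]
  omega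

lemma Symp.bb (h : Symp B n) (W : Submodule F V) : bperp B (bperp B W) = W := by
  have := h.fin
  refine (Submodule.eq_of_le_of_finrank_eq (h.le_bb W) ?_).symm
  have h1 := h.finrank_bperp W
  have h2 := h.finrank_bperp (bperp B W)
  omega

lemma Symp.le_bperp_comm (h : Symp B n) {U W : Submodule F V} (hUW : U ≤ bperp B W) :
    W ≤ bperp B U := by
  have := bperp_anti (B := B) hUW
  rwa [h.bb] at this

lemma bperp_sup (U W : Submodule F V) : bperp B (U ⊔ W) = bperp B U ⊓ bperp B W := by
  apply le_antisymm
  · exact le_inf (bperp_anti le_sup_left) (bperp_anti le_sup_right)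
  · intro x hx
    obtain ⟨h1, h2⟩ := Submodule.mem_inf.1 hx
    rw [mem_bperp] at h1 h2 ⊢
    intro w hw
    obtain ⟨a, ha, b, hb, rfl⟩ := Submodule.mem_sup.1 hw
    rw [map_add, LinearMap.add_apply, h1 a ha, h2 b hb, add_zero]

lemma bperp_bot : bperp B (⊥ : Submodule F V) = ⊤ := by
  rw [eq_top_iff]
  intro x _
  rw [mem_bperp]
  intro w hw
  rw [(Submodule.mem_bot F).1 hw]; simp

lemma Symp.bperp_inj (h : Symp B n) {U W : Submodule F V} (e : bperp B U = bperp B W) : U = W := by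
  rw [← h.bb U, e, h.bb]

lemma Symp.bperp_inf (h : Symp B n) (U W : Submodule F V) :
    bperp B (U ⊓ W) = bperp B U ⊔ bperp B W := by
  apply h.bperp_inj
  rw [h.bb, bperp_sup, h.bb, h.bb]

/-- complementary subspaces and perps -/
lemma Symp.inf_bot_symm (h : Symp B n) {U W : Submodule F V}
    (hd : finrank F U = finrank F W) (e : bperp B U ⊓ W = ⊥) : bperp B W ⊓ U = ⊥ := by
  have := h.fin
  have h1 := h.finrank_bperp (bperp B U ⊓ W)
  rw [e, finrank_bot, ← e, h.bperp_inf, h.bb] at h1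
  have h2 := Submodule.finrank_sup_add_finrank_inf_eq (bperp B W) U
  have h3 := h.finrank_bperp W
  rw [sup_comm] at h2
  rw [← Submodule.finrank_eq_zero (R := F)]
  omega

lemma isTotIso_iff {W : Submodule F V} : IsTotIso B W ↔ W ≤ bperp B W := by
  constructor
  · intro h x hx
    rw [mem_bperp]
    exact fun w hw => h w hw x hx
  · intro h u hu w hw
    exact mem_bperp.1 (h hw) u hu

lemma sup_span_eq [FiniteDimensional F V] {U Y : Submodule F V} {x : V} (hUY : U ≤ Y)
    (hd : finrank F Y = finrank F U + 1) (hx : x ∈ Y) (hxU : x ∉ U) : U ⊔ F ∙ x = Y := by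
  have h1 : U ⊔ F ∙ x ≤ Y := sup_le hUY (by rwa [Submodule.span_singleton_le_iff_mem])
  have h2 : U < U ⊔ F ∙ x := by
    refine lt_of_le_of_ne le_sup_left (fun e => hxU ?_)
    rw [e]
    exact le_sup_right (a := U) (Submodule.mem_span_singleton_self x)
  have h3 := Submodule.finrank_lt_finrank_of_lt h2
  have h4 := Submodule.finrank_mono h1
  exact Submodule.eq_of_le_of_finrank_eq h1 (by omega)

lemma finrank_sup_span [FiniteDimensional F V] {U : Submodule F V} {x : V} (hxU : x ∉ U) :
    finrank F (U ⊔ F ∙ x : Submodule F V) = finrank F U + 1 := by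
  have h2 : U < U ⊔ F ∙ x := by
    refine lt_of_le_of_ne le_sup_left (fun e => hxU ?_)
    rw [e]
    exact le_sup_right (a := U) (Submodule.mem_span_singleton_self x)
  have h3 := Submodule.finrank_lt_finrank_of_lt h2
  have h4 := Submodule.finrank_add_le_finrank_add_finrank U (F ∙ x)
  have h5 : finrank F (F ∙ x) ≤ 1 := by
    simpa using finrank_span_le_card (R := F) ({x} : Set V)
  omega

/-- extending an isotropic space by a perpendicular vector -/
lemma Symp.iso_ext (h : Symp B n) {U Y : Submodule F V} (hU : U ≤ bperp B U) (hUY : U ≤ Y)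
    (hYU : Y ≤ bperp B U) (hd : finrank F Y = finrank F U + 1) : Y ≤ bperp B Y := by
  have := h.fin
  have h2 : ¬ Y ≤ U := fun hle => by
    have := Submodule.finrank_mono hle; omega
  obtain ⟨x, hx, hxU⟩ := Set.not_subset.1 h2
  have e := sup_span_eq hUY hd hx hxU
  have hxx : (F ∙ x) ≤ bperp B (F ∙ x) := by
    rw [Submodule.span_singleton_le_iff_mem, mem_bperp]
    intro w hw
    obtain ⟨c, rfl⟩ := Submodule.mem_span_singleton.1 hw
    simp [h.alt x]
  have hxU' : (F ∙ x) ≤ bperp B U := by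
    rw [Submodule.span_singleton_le_iff_mem]; exact hYU hx
  rw [← e, bperp_sup]
  exact sup_le (le_inf hU (h.le_bperp_comm hxU')) (le_inf hxU' hxx)

/-- chambers -/
abbrev Ch (B : V →ₗ[F] V →ₗ[F] F) (n : ℕ) := SFlag B (Finset.Icc 1 n)

lemma ch_ext {C D : Ch B n} (h : ∀ i, 1 ≤ i → i ≤ n → C.space i = D.space i) : C = D := by
  have : C.space = D.space := by
    funext i
    by_cases hi : i ∈ Finset.Icc 1 n
    · exact h i (Finset.mem_Icc.1 hi).1 (Finset.mem_Icc.1 hi).2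
    · rw [C.eq_bot i hi, D.eq_bot i hi]
  cases C; cases D; simp_all

lemma sp_zero (C : Ch B n) : C.space 0 = ⊥ := C.eq_bot 0 (by simp)

lemma sp_dim (C : Ch B n) {i : ℕ} (hi : i ≤ n) : finrank F (C.space i) = i := by
  rcases Nat.eq_zero_or_pos i with rfl | h
  · rw [sp_zero, finrank_bot]
  · exact C.finrank_eq i (Finset.mem_Icc.2 ⟨h, hi⟩)

lemma sp_mono (C : Ch B n) {i j : ℕ} (hij : i ≤ j) (hj : j ≤ n) : C.space i ≤ C.space j := by
  rcases Nat.eq_zero_or_pos i with rfl | h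
  · rw [sp_zero]; exact bot_le
  · exact C.mono i (Finset.mem_Icc.2 ⟨h, hij.trans hj⟩) j (Finset.mem_Icc.2 ⟨h.trans_le hij, hj⟩) hij

lemma sp_iso (C : Ch B n) {i j : ℕ} (hi : i ≤ n) (hj : j ≤ n) :
    C.space i ≤ bperp B (C.space j) := by
  rcases Nat.eq_zero_or_pos n with rfl | hn
  · have : i = 0 := by omega
    subst this; rw [sp_zero]; exact bot_le
  have h1 := isTotIso_iff.1 (C.isotropic n (Finset.mem_Icc.2 ⟨hn, le_rfl⟩))
  exact (sp_mono C hi le_rfl).trans (h1.trans (bperp_anti (sp_mono C hj le_rfl)))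

/-- the self-dual full flag attached to a chamber -/
noncomputable def ex (C : Ch B n) (j : ℕ) : Submodule F V :=
  if j ≤ n then C.space j else bperp B (C.space (2 * n - j))

lemma ex_le {C : Ch B n} {j : ℕ} (hj : j ≤ n) : ex C j = C.space j := by rw [ex, if_pos hj]

lemma Symp.self_n (h : Symp B n) (C : Ch B n) : bperp B (C.space n) = C.space n := by
  have := h.fin
  refine (Submodule.eq_of_le_of_finrank_eq (sp_iso C le_rfl le_rfl) ?_).symm
  have h1 := h.finrank_bperp (C.space n)
  rw [sp_dim C le_rfl] at h1 ⊢
  omega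

lemma Symp.ex_ge (h : Symp B n) {C : Ch B n} {j : ℕ} (hj : n ≤ j) :
    ex C j = bperp B (C.space (2 * n - j)) := by
  rcases Nat.eq_or_lt_of_le hj with rfl | hj
  · rw [ex_le le_rfl]
    have : 2 * n - n = n := by omega
    rw [this, h.self_n]
  · rw [ex, if_neg (by omega)]

lemma Symp.ex_perp (h : Symp B n) (C : Ch B n) {i j : ℕ} (hij : i + j = 2 * n) :
    bperp B (ex C i) = ex C j := by
  rcases le_total i n with hi | hi
  · rw [ex_le hi, h.ex_ge (by omega)]
    congr 2; omega
  · rw [h.ex_ge hi, h.bb, ex_le (by omega)]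
    congr 1; omega

lemma Symp.ex_dim (h : Symp B n) (C : Ch B n) {i : ℕ} (hi : i ≤ 2 * n) :
    finrank F (ex C i) = i := by
  rcases le_total i n with hi' | hi'
  · rw [ex_le hi', sp_dim C hi']
  · rw [h.ex_ge hi']
    have h1 := h.finrank_bperp (C.space (2 * n - i))
    rw [sp_dim C (by omega)] at h1
    omega

lemma Symp.ex_mono (h : Symp B n) (C : Ch B n) {i j : ℕ} (hij : i ≤ j) :
    ex C i ≤ ex C j := by
  rcases le_total j n with hj | hj
  · rw [ex_le hj, ex_le (hij.trans hj)]; exact sp_mono C hij hj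
  · rcases le_total i n with hi | hi
    · rw [ex_le hi, h.ex_ge hj]; exact sp_iso C hi (by omega)
    · rw [h.ex_ge hi, h.ex_ge hj]
      exact bperp_anti (sp_mono C (by omega) (by omega))

lemma ex_zero (C : Ch B n) : ex C 0 = ⊥ := by rw [ex_le (Nat.zero_le _), sp_zero]

lemma Symp.ex_top (h : Symp B n) (C : Ch B n) : ex C (2 * n) = ⊤ := by
  rw [h.ex_ge (by omega), Nat.sub_self, sp_zero, bperp_bot]

/-- same except possibly at position `i` -/
def Adj (i : ℕ) (C D : Ch B n) : Prop := ∀ j, j ≠ i → C.space j = D.space j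

lemma adj_equiv (i : ℕ) : Equivalence (Adj (B := B) (n := n) i) :=
  ⟨fun _ _ _ => rfl, fun h j hj => (h j hj).symm, fun h1 h2 j hj => (h1 j hj).trans (h2 j hj)⟩

lemma Adj.ext {i : ℕ} {C D : Ch B n} (h : Adj i C D) (e : C.space i = D.space i) : C = D := by
  apply ch_ext
  intro j _ _
  by_cases hj : j = i
  · rw [hj, e]
  · exact h j hj

lemma Adj.ex {i : ℕ} {C D : Ch B n} (h : Adj i C D) {j : ℕ} (hj : j ≠ i) (hj' : j ≠ 2 * n - i)
    (hj2 : j ≤ 2 * n) :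
    ex C j = ex D j := by
  unfold PF.ex
  split_ifs
  · exact h j hj
  · rw [h (2 * n - j) (by omega)]

/-- replace the entry at position `i`. -/
lemma Symp.repl (h : Symp B n) (C : Ch B n) {i : ℕ} (hi : 1 ≤ i) (hin : i ≤ n) (Y : Submodule F V)
    (h1 : ex C (i - 1) ≤ Y) (h2 : Y ≤ ex C (i + 1)) (hd : finrank F Y = i) :
    ∃ D : Ch B n, Adj i C D ∧ D.space i = Y := by
  have hiso : Y ≤ bperp B Y := by
    rw [ex_le (by omega)] at h1
    apply h.iso_ext (sp_iso C (by omega) (by omega)) h1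
    · refine h2.trans ?_
      have e : bperp B (C.space (i - 1)) = PF.ex C (2 * n - (i - 1)) := by
        rw [← ex_le (by omega), h.ex_perp]; omega
      rw [e]
      exact h.ex_mono C (by omega)
    · rw [hd, sp_dim C (by omega)]; omega
  refine ⟨⟨Function.update C.space i Y, ?_, ?_, ?_, ?_⟩, ?_, ?_⟩
  · intro j hj
    by_cases hji : j = i
    · subst hji; rw [Function.update_self]; exact isTotIso_iff.2 hiso
    · rw [Function.update_of_ne hji]; exact C.isotropic j hj
  · intro j hj
    by_cases hji : j = i
    · subst hji; rw [Function.update_self]; exact hd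
    · rw [Function.update_of_ne hji]; exact C.finrank_eq j hj
  · intro j hj k hk hjk
    have hj' := Finset.mem_Icc.1 hj
    have hk' := Finset.mem_Icc.1 hk
    by_cases hji : j = i
    · by_cases hki : k = i
      · rw [hji, hki]
      · rw [hji, Function.update_self, Function.update_of_ne hki]
        refine h2.trans ?_
        rw [← ex_le hk'.2]
        exact h.ex_mono C (by omega)
    · by_cases hki : k = i
      · rw [hki, Function.update_self, Function.update_of_ne hji]
        refine le_trans ?_ h1
        rw [← ex_le hj'.2]
        exact h.ex_mono C (by omega)
      · rw [Function.update_of_ne hji, Function.update_of_ne hki]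
        exact C.mono j hj k hk hjk
  · intro j hj
    have hji : j ≠ i := by
      rintro rfl; exact hj (Finset.mem_Icc.2 ⟨hi, hin⟩)
    rw [Function.update_of_ne hji]; exact C.eq_bot j hj
  · intro j hj
    exact (Function.update_of_ne hj _ _).symm
  · exact Function.update_self _ _ _

end geom
end PF

namespace PF
section geom2

variable {F V : Type} [Field F] [AddCommGroup V] [Module F V]
variable {B : V →ₗ[F] V →ₗ[F] F} {n : ℕ}

lemma ch_finite [Finite V] : Finite (Ch B n) := by
  have : Finite (Submodule F V) := Finite.of_injective (fun W : Submodule F V => (W : Set V))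
    SetLike.coe_injective
  apply Finite.of_injective (fun C : Ch B n => fun i : Fin (n + 1) => C.space i)
  intro C D hCD
  apply ch_ext
  intro i _ hi
  exact congrFun hCD ⟨i, by omega⟩

lemma card_diff [Fintype F] [Fintype V] {U Y : Submodule F V} (hUY : U ≤ Y) :
    (Finset.univ.filter (fun x : V => x ∈ Y ∧ x ∉ U)).card + Fintype.card F ^ finrank F U
      = Fintype.card F ^ finrank F Y := by
  have hc : ∀ W : Submodule F V, (Finset.univ.filter (fun x : V => x ∈ W)).card
      = Fintype.card F ^ finrank F W := by
    intro W
    rw [← Module.card_eq_pow_finrank (K := F) (V := W)]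
    rw [Fintype.card_subtype]
  rw [← hc U, ← hc Y]
  rw [← Finset.card_union_of_disjoint]
  · congr 1
    ext x
    simp only [Finset.mem_union, Finset.mem_filter, Finset.mem_univ, true_and]
    have := @hUY x
    tauto
  · rw [Finset.disjoint_left]
    intro x h1 h2
    simp only [Finset.mem_filter, Finset.mem_univ, true_and] at h1 h2
    exact h1.2 h2

lemma Symp.panel (h : Symp B n) [Fintype F] [Fintype V] [Fintype (Ch B n)] (C : Ch B n)
    {i : ℕ} (hi : 1 ≤ i) (hin : i ≤ n) :
    (Finset.univ.filter (fun D => Adj i C D)).card = Fintype.card F + 1 := by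
  have := h.fin
  set q := Fintype.card F with hq
  have hq1 : 1 < q := Fintype.one_lt_card
  set U := ex C (i - 1) with hU
  set W := ex C (i + 1) with hW
  have hUW : U ≤ W := h.ex_mono C (by omega)
  have hdU : finrank F U = i - 1 := h.ex_dim C (by omega)
  have hdW : finrank F W = i + 1 := h.ex_dim C (by omega)
  set P := Finset.univ.filter (fun D => Adj i C D) with hP
  have hPU : ∀ D ∈ P, U ≤ D.space i ∧ D.space i ≤ W := by
    intro D hD
    have hD' : Adj i C D := (Finset.mem_filter.1 hD).2
    have e1 : U = ex D (i - 1) := hD'.ex (by omega) (by omega) (by omega)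
    have e2 : W = ex D (i + 1) := by
      by_cases hi2 : i + 1 ≤ n
      · exact hD'.ex (by omega) (by omega) (by omega)
      · have : i = n := by omega
        subst this
        rw [hW, h.ex_ge (by omega), h.ex_ge (by omega), hD' _ (by omega)]
    rw [e1, e2, ← ex_le hin]
    exact ⟨h.ex_mono D (by omega), h.ex_mono D (by omega)⟩
  have hS : Finset.univ.filter (fun x : V => x ∈ W ∧ x ∉ U)
      = P.biUnion (fun D => Finset.univ.filter (fun x : V => x ∈ D.space i ∧ x ∉ U)) := by
    ext x
    simp only [Finset.mem_biUnion, Finset.mem_filter, Finset.mem_univ, true_and]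
    constructor
    · rintro ⟨hx, hxU⟩
      obtain ⟨D, hD, hDi⟩ := h.repl C hi hin (U ⊔ F ∙ x) le_sup_left
        (sup_le hUW (by rwa [Submodule.span_singleton_le_iff_mem]))
        (by rw [finrank_sup_span hxU, hdU]; omega)
      refine ⟨D, Finset.mem_filter.2 ⟨Finset.mem_univ _, hD⟩, ?_, hxU⟩
      rw [hDi]
      exact le_sup_right (a := U) (Submodule.mem_span_singleton_self x)
    · rintro ⟨D, hD, hx, hxU⟩
      exact ⟨(hPU D hD).2 hx, hxU⟩
  have h1 := card_diff hUW
  rw [hS, Finset.card_biUnion] at h1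
  · have h2 : ∀ D ∈ P, (Finset.univ.filter (fun x : V => x ∈ D.space i ∧ x ∉ U)).card
        = q ^ i - q ^ (i - 1) := by
      intro D hD
      have h3 := card_diff (hPU D hD).1
      rw [sp_dim D hin, hdU, ← hq] at h3
      omega
    rw [Finset.sum_congr rfl h2, Finset.sum_const, hdU, hdW, smul_eq_mul, ← hq] at h1
    obtain ⟨k, rfl⟩ : ∃ k, i = k + 1 := ⟨i - 1, by omega⟩
    simp only [Nat.add_sub_cancel] at h1
    obtain ⟨r, hr⟩ : ∃ r, q = r + 1 := ⟨q - 1, by omega⟩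
    have e3 : q ^ (k + 1) - q ^ k = r * q ^ k := by
      rw [pow_succ, hr]
      apply Nat.sub_eq_of_eq_add
      ring
    rw [e3] at h1
    have hqk : 0 < q ^ k := by positivity
    have h4 : (r * q ^ k) * P.card = (r * q ^ k) * (q + 1) := by
      have : q ^ (k + 1 + 1) = (r * q ^ k) * (q + 1) + q ^ k := by
        rw [pow_succ, pow_succ]
        rw [hr]; ring
      rw [this] at h1
      linarith
    exact Nat.eq_of_mul_eq_mul_left (Nat.mul_pos (by omega) hqk) h4
  · intro D hD D' hD' hne
    rw [Function.onFun, Finset.disjoint_left]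
    intro x hx1 hx2
    simp only [Finset.mem_filter, Finset.mem_univ, true_and] at hx1 hx2
    apply hne
    have hA : Adj i D D' := (adj_equiv i).trans ((adj_equiv i).symm (Finset.mem_filter.1 hD).2)
      (Finset.mem_filter.1 hD').2
    apply hA.ext
    rw [← sup_span_eq (hPU D hD).1 (by rw [sp_dim D hin, hdU]; omega) hx1.1 hx1.2,
      ← sup_span_eq (hPU D' hD').1 (by rw [sp_dim D' hin, hdU]; omega) hx2.1 hx2.2]

lemma Symp.opp_symm (h : Symp B n) {C D : Ch B n} (hCD : FlagOpp C D) : FlagOpp D C := by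
  intro i hi
  apply h.inf_bot_symm _ (hCD i hi)
  rw [C.finrank_eq i hi, D.finrank_eq i hi]

/-- opposite at a position of the extended flag -/
lemma Symp.ex_opp (h : Symp B n) {C D : Ch B n} {j k : ℕ} (hjk : j + k = 2 * n)
    (hj : bperp B (ex C j) ⊓ ex D j = ⊥) : bperp B (ex C k) ⊓ ex D k = ⊥ := by
  have := h.fin
  have hkj : k + j = 2 * n := by omega
  rw [← h.ex_perp C hjk, ← h.ex_perp D hjk]
  rw [h.bb, inf_comm]
  apply h.inf_bot_symm _ hj
  rw [h.ex_dim C (by omega), h.ex_dim D (by omega)]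

lemma Symp.star (h : Symp B n) {C D : Ch B n} {i : ℕ} (hi : 1 ≤ i) (hin : i ≤ n)
    (hopp : ∀ j, 1 ≤ j → j ≤ n → j ≠ i → bperp B (C.space j) ⊓ D.space j = ⊥) :
    ∃ D0, Adj i D D0 ∧ ∀ D', Adj i D D' → (FlagOpp C D' ↔ D' ≠ D0) := by
  have := h.fin
  have hopp' : ∀ j, j ≤ n → j ≠ i → bperp B (ex C j) ⊓ ex D j = ⊥ := by
    intro j hj hji
    rw [ex_le hj, ex_le hj]
    rcases Nat.eq_zero_or_pos j with rfl | hj0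
    · rw [sp_zero D, inf_bot_eq]
    · exact hopp j hj0 hj hji
  have hup : bperp B (ex C (i + 1)) ⊓ ex D (i + 1) = ⊥ := by
    by_cases hi2 : i + 1 ≤ n
    · exact hopp' _ hi2 (by omega)
    · have : i = n := by omega
      subst this
      exact h.ex_opp (j := i - 1) (by omega) (hopp' _ (by omega) (by omega))
  have hdn : bperp B (ex C (i - 1)) ⊓ ex D (i - 1) = ⊥ := hopp' _ (by omega) (by omega)
  set X := bperp B (ex C i) with hX
  set W := ex D (i + 1) with hW
  set U := ex D (i - 1) with hU
  have hUW : U ≤ W := h.ex_mono D (by omega)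
  have hdU : finrank F U = i - 1 := h.ex_dim D (by omega)
  have hdW : finrank F W = i + 1 := h.ex_dim D (by omega)
  have hdX : finrank F X = 2 * n - i := by
    have := h.finrank_bperp (ex C i)
    rw [h.ex_dim C (by omega), ← hX] at this
    omega
  have hXU : X ⊓ U = ⊥ := by
    rw [eq_bot_iff, ← hdn]
    exact inf_le_inf_right _ (bperp_anti (h.ex_mono C (by omega)))
  -- the one dimensional intersection
  have hZ1 : finrank F (X ⊓ W : Submodule F V) = 1 := by
    have e1 := Submodule.finrank_sup_add_finrank_inf_eq X W
    have e2 : finrank F (X ⊔ W : Submodule F V) ≤ 2 * n := by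
      rw [← h.dim]; exact Submodule.finrank_le _
    set X' := bperp B (ex C (i + 1)) with hX'
    have hX'X : X' ≤ X := bperp_anti (h.ex_mono C (by omega))
    have hdX' : finrank F X' = 2 * n - i - 1 := by
      have := h.finrank_bperp (ex C (i + 1))
      rw [h.ex_dim C (by omega), ← hX'] at this
      omega
    have e3 := Submodule.finrank_sup_add_finrank_inf_eq X' (X ⊓ W)
    have e4 : X' ⊓ (X ⊓ W) = ⊥ := by
      rw [eq_bot_iff, ← hup]
      exact inf_le_inf_left _ inf_le_right
    have e5 := Submodule.finrank_mono (sup_le hX'X (inf_le_left : X ⊓ W ≤ X))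
    rw [e4, finrank_bot] at e3
    omega
  obtain ⟨z, hz, hz0⟩ : ∃ z ∈ X ⊓ W, z ≠ 0 := by
    apply Submodule.exists_mem_ne_zero_of_ne_bot
    intro e
    rw [e, finrank_bot] at hZ1
    omega
  have hzX : z ∈ X := hz.1
  have hzW : z ∈ W := hz.2
  have hzU : z ∉ U := fun hzU => hz0 (by
    have : z ∈ X ⊓ U := ⟨hzX, hzU⟩
    rwa [hXU, Submodule.mem_bot] at this)
  have hZspan : ∀ y ∈ X ⊓ W, y ≠ 0 → z ∈ F ∙ y := by
    intro y hy hy0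
    have e : F ∙ y = X ⊓ W := by
      apply Submodule.eq_of_le_of_finrank_eq
      · rwa [Submodule.span_singleton_le_iff_mem]
      · rw [hZ1, finrank_span_singleton hy0]
    rw [e]; exact hz
  obtain ⟨D0, hD0, hD0i⟩ := h.repl D hi hin (U ⊔ F ∙ z) le_sup_left
    (sup_le hUW (by rwa [Submodule.span_singleton_le_iff_mem]))
    (by rw [finrank_sup_span hzU, hdU]; omega)
  refine ⟨D0, hD0, fun D' hD' => ?_⟩
  have e1 : U = ex D' (i - 1) := hD'.ex (by omega) (by omega) (by omega)
  have e2 : W = ex D' (i + 1) := by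
    by_cases hi2 : i + 1 ≤ n
    · exact hD'.ex (by omega) (by omega) (by omega)
    · have : i = n := by omega
      subst this
      rw [hW, h.ex_ge (by omega), h.ex_ge (by omega), hD' _ (by omega)]
  have hUD : U ≤ D'.space i := by rw [e1, ← ex_le hin]; exact h.ex_mono D' (by omega)
  have hDW : D'.space i ≤ W := by rw [e2, ← ex_le hin]; exact h.ex_mono D' (by omega)
  have hCX : bperp B (C.space i) = X := by rw [hX, ex_le hin]
  constructor
  · rintro ho rfl
    have := ho i (Finset.mem_Icc.2 ⟨hi, hin⟩)
    rw [hD0i, hCX] at this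
    apply hz0
    have hzz : z ∈ X ⊓ (U ⊔ F ∙ z) :=
      ⟨hzX, le_sup_right (a := U) (Submodule.mem_span_singleton_self z)⟩
    rwa [this, Submodule.mem_bot] at hzz
  · intro hne j hj
    have hj' := Finset.mem_Icc.1 hj
    by_cases hji : j = i
    · subst hji
      rw [hCX]
      by_contra hcon
      obtain ⟨y, hy, hy0⟩ := Submodule.exists_mem_ne_zero_of_ne_bot hcon
      apply hne
      have hzD : z ∈ D'.space j := by
        have := hZspan y ⟨hy.1, hDW hy.2⟩ hy0
        exact (Submodule.span_singleton_le_iff_mem _ _).2 hy.2 this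
      have hA : Adj j D' D0 := (adj_equiv j).trans ((adj_equiv j).symm hD') hD0
      apply hA.ext
      rw [hD0i, sup_span_eq hUD (by rw [sp_dim D' hin, hdU]; omega) hzD hzU]
    · rw [← hD' j hji]
      exact hopp j hj'.1 hj'.2 hji

lemma Symp.count (h : Symp B n) [Fintype F] [Fintype V] [Fintype (Ch B n)] (C D : Ch B n)
    {i : ℕ} (hi : 1 ≤ i) (hin : i ≤ n) :
    (Finset.univ.filter (fun E => Adj i D E ∧ FlagOpp C E)).card =
      if (∀ j, 1 ≤ j → j ≤ n → j ≠ i → bperp B (C.space j) ⊓ D.space j = ⊥) then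
        Fintype.card F else 0 := by
  split_ifs with hc
  · obtain ⟨D0, hD0, hst⟩ := h.star hi hin hc
    have hp := h.panel D hi hin
    have e : Finset.univ.filter (fun E => Adj i D E ∧ FlagOpp C E)
        = (Finset.univ.filter (fun E => Adj i D E)).erase D0 := by
      ext E
      simp only [Finset.mem_filter, Finset.mem_univ, true_and, Finset.mem_erase]
      constructor
      · rintro ⟨h1, h2⟩; exact ⟨(hst E h1).1 h2, h1⟩
      · rintro ⟨h1, h2⟩; exact ⟨h2, (hst E h2).2 h1⟩
    rw [e, Finset.card_erase_of_mem (by simp [hD0]), hp]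
    rfl
  · rw [Finset.card_eq_zero, Finset.filter_eq_empty_iff]
    rintro E - ⟨h1, h2⟩
    apply hc
    intro j hj1 hj2 hji
    rw [h1 j hji]
    exact h2 j (Finset.mem_Icc.2 ⟨hj1, hj2⟩)

lemma Symp.comm_mat (h : Symp B n) [Fintype F] [Fintype V] [Fintype (Ch B n)]
    {i : ℕ} (hi : 1 ≤ i) (hin : i ≤ n) :
    adjM (Adj (B := B) (n := n) i) * relM (FlagOpp (B := B) (J := Finset.Icc 1 n))
      = relM FlagOpp * adjM (Adj i) := by
  rw [relM_eq _ (adj_equiv i), sub_mul, mul_sub, one_mul, mul_one]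
  congr 1
  ext C D
  rw [Matrix.mul_apply, Matrix.mul_apply]
  simp only [relM, ← ite_and, mul_ite, mul_one, mul_zero, Finset.sum_boole]
  have h1 := h.count D C hi hin
  have h2 := h.count C D hi hin
  have e1 : (Finset.univ.filter (fun E => FlagOpp E D ∧ Adj i C E)).card
      = (Finset.univ.filter (fun E => Adj i C E ∧ FlagOpp D E)).card := by
    congr 1
    ext E
    simp only [Finset.mem_filter, Finset.mem_univ, true_and]
    exact ⟨fun h' => ⟨h'.2, h.opp_symm h'.1⟩, fun h' => ⟨h.opp_symm h'.2, h'.1⟩⟩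
  have e2 : (Finset.univ.filter (fun E => Adj i E D ∧ FlagOpp C E)).card
      = (Finset.univ.filter (fun E => Adj i D E ∧ FlagOpp C E)).card := by
    congr 1
    ext E
    simp only [Finset.mem_filter, Finset.mem_univ, true_and]
    exact ⟨fun h' => ⟨(adj_equiv i).symm h'.1, h'.2⟩, fun h' => ⟨(adj_equiv i).symm h'.1, h'.2⟩⟩
  rw [e1, e2, h1, h2]
  congr 2
  apply propext
  constructor
  · intro h' j h1 h2 h3
    exact h.inf_bot_symm (by rw [sp_dim _ h2, sp_dim _ h2]) (h' j h1 h2 h3)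
  · intro h' j h1 h2 h3
    exact h.inf_bot_symm (by rw [sp_dim _ h2, sp_dim _ h2]) (h' j h1 h2 h3)

end geom2
end PF

namespace PF
section rounds

lemma relM_mul {X : Type*} [Fintype X] (R1 R2 R3 : X → X → Prop)
    (h1 : ∀ x y z, R1 x y → R2 y z → R3 x z)
    (h2 : ∀ x z, R3 x z → ∃ y, R1 x y ∧ R2 y z)
    (h3 : ∀ x y y' z, R1 x y → R2 y z → R1 x y' → R2 y' z → y = y') :
    relM R1 * relM R2 = relM R3 := by
  ext x z
  rw [Matrix.mul_apply]
  simp only [relM, ← ite_and, mul_ite, mul_one, mul_zero, Finset.sum_boole]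
  by_cases h : R3 x z
  · obtain ⟨y, hy1, hy2⟩ := h2 x z h
    rw [if_pos h]
    have : Finset.univ.filter (fun w => R2 w z ∧ R1 x w) = {y} := by
      ext w
      simp only [Finset.mem_filter, Finset.mem_univ, true_and, Finset.mem_singleton]
      constructor
      · rintro ⟨hw1, hw2⟩; exact h3 x w y z hw2 hw1 hy1 hy2
      · rintro rfl; exact ⟨hy2, hy1⟩
    rw [this]; simp
  · rw [if_neg h]
    have : Finset.univ.filter (fun w => R2 w z ∧ R1 x w) = ∅ := by
      rw [Finset.filter_eq_empty_iff]
      rintro w - ⟨hw1, hw2⟩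
      exact h (h1 x w z hw2 hw1)
    rw [this]; simp

variable {F V : Type} [Field F] [AddCommGroup V] [Module F V]
variable {B : V →ₗ[F] V →ₗ[F] F} {n : ℕ}

/-- partial round -/
def RdP (j : ℕ) (C D : Ch B n) : Prop :=
  (∀ i, j < i → D.space i = C.space i) ∧
  (∀ i, 1 ≤ i → i ≤ j → i < n → D.space i ≤ C.space (i + 1)) ∧
  (∀ i, 1 ≤ i → i ≤ j → D.space i ≠ C.space i)

lemma Symp.rdP_step (h : Symp B n) [Fintype (Ch B n)] {j : ℕ} (hj : j < n) :
    relM (RdP (B := B) (n := n) j) * adjM (Adj (j + 1)) = relM (RdP (j + 1)) := by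
  have e : adjM (Adj (B := B) (n := n) (j + 1)) = relM (fun C D => Adj (j + 1) C D ∧ C ≠ D) := by
    ext C D; simp only [adjM, relM]; congr
  rw [e]
  apply relM_mul
  · rintro C C' D ⟨h1, h2, h3⟩ ⟨h4, h5⟩
    refine ⟨?_, ?_, ?_⟩
    · intro i hi
      rw [← h4 i (by omega), h1 i (by omega)]
    · intro i hi1 hi2 hin
      by_cases hij : i = j + 1
      · subst hij
        rw [← h1 (j + 1 + 1) (by omega), h4 (j + 1 + 1) (by omega)]
        exact sp_mono D (by omega) (by omega)
      · rw [← h4 i hij]; exact h2 i hi1 (by omega) hin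
    · intro i hi1 hi2
      by_cases hij : i = j + 1
      · subst hij
        rw [← h1 (j + 1) (by omega)]
        intro e'
        exact h5 (h4.ext e'.symm)
      · rw [← h4 i hij]; exact h3 i hi1 (by omega)
  · rintro C D ⟨h1, h2, h3⟩
    have hlo : D.space j ≤ C.space (j + 1) := by
      rcases Nat.eq_zero_or_pos j with rfl | hj0
      · rw [sp_zero]; exact bot_le
      · exact h2 j hj0 (by omega) hj
    obtain ⟨C', hC', hC'j⟩ := h.repl D (i := j + 1) (by omega) (by omega) (C.space (j + 1))
      (by rw [Nat.add_sub_cancel, ex_le (by omega)]; exact hlo)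
      (by
        by_cases hjn : j + 1 + 1 ≤ n
        · rw [ex_le hjn, h1 _ (by omega)]; exact sp_mono C (by omega) hjn
        · rw [h.ex_ge (by omega)]
          apply h.le_bperp_comm
          have : 2 * n - (j + 1 + 1) = j := by omega
          rw [this]
          exact hlo.trans (sp_iso C (by omega) (by omega)))
      (sp_dim C (by omega))
    refine ⟨C', ⟨?_, ?_, ?_⟩, (adj_equiv _).symm hC', ?_⟩
    · intro i hi
      by_cases hij : i = j + 1
      · rw [hij, hC'j]
      · rw [← hC' i hij, h1 i (by omega)]
    · intro i hi1 hi2 hin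
      rw [← hC' i (by omega)]; exact h2 i hi1 (by omega) hin
    · intro i hi1 hi2
      rw [← hC' i (by omega)]; exact h3 i hi1 (by omega)
    · rintro rfl
      exact h3 (j + 1) (by omega) le_rfl hC'j
  · rintro C C' C'' D ⟨h1, -, -⟩ ⟨h4, -⟩ ⟨h1', -, -⟩ ⟨h4', -⟩
    have : Adj (j + 1) C' C'' := (adj_equiv _).trans h4 ((adj_equiv _).symm h4')
    apply this.ext
    rw [h1 _ (by omega), h1' _ (by omega)]

/-- full round -/
abbrev Rd (C D : Ch B n) : Prop := RdP n C D

lemma Symp.rd_word (h : Symp B n) [Fintype (Ch B n)] {j : ℕ} (hj : j ≤ n) :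
    ((List.range j).map (fun i => adjM (Adj (B := B) (n := n) (i + 1)))).prod = relM (RdP j) := by
  induction j with
  | zero =>
    simp only [List.range_zero, List.map_nil, List.prod_nil]
    ext C D
    have : RdP 0 C D ↔ C = D := by
      constructor
      · rintro ⟨h1, -, -⟩
        exact ch_ext (fun i hi _ => (h1 i (by omega)).symm)
      · rintro rfl
        exact ⟨fun _ _ => rfl, fun i h1 h2 => by omega, fun i h1 h2 => by omega⟩
    simp only [relM, this, Matrix.one_apply]
  | succ j ih =>
    rw [List.range_succ, List.map_append, List.prod_append, ih (by omega)]
    simp only [List.map_cons, List.map_nil, List.prod_cons, List.prod_nil, mul_one]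
    exact h.rdP_step (by omega)

lemma Rd.le {C D : Ch B n} (h : Rd C D) {i : ℕ} (hi : i < n) : D.space i ≤ C.space (i + 1) := by
  rcases Nat.eq_zero_or_pos i with rfl | hi0
  · rw [sp_zero]; exact bot_le
  · exact h.2.1 i hi0 hi.le hi

lemma Symp.rd_not (hS : Symp B n) {C D : Ch B n} (h : Rd C D) {p : V}
    (hp : C.space 1 = F ∙ p) {i : ℕ} (hi : i ≤ n) : p ∉ D.space i := by
  have := hS.fin
  have hpn : p ∈ C.space 1 := by rw [hp]; exact Submodule.mem_span_singleton_self p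
  induction i with
  | zero =>
    rw [sp_zero, Submodule.mem_bot]
    intro h0
    have h1 := sp_dim C hS.pos
    rw [hp, h0, Submodule.span_zero_singleton, finrank_bot] at h1
    omega
  | succ i ih =>
    intro hc
    apply h.2.2 (i + 1) (by omega) hi
    have e1 := sup_span_eq (sp_mono D (Nat.le_succ i) hi) (by rw [sp_dim D hi, sp_dim D (by omega)])
      hc (ih (by omega))
    have e2 := sup_span_eq (h.le (i := i) (by omega))
      (by rw [sp_dim C hi, sp_dim D (by omega)]) (sp_mono C (by omega) hi hpn) (ih (by omega))
    rw [← e1, ← e2]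

lemma Symp.rd_eq (hS : Symp B n) {C D : Ch B n} (h : Rd C D) {p : V}
    (hp : C.space 1 = F ∙ p) {i : ℕ} (hi : i < n) : D.space i ⊔ F ∙ p = C.space (i + 1) := by
  have := hS.fin
  have hpn : p ∈ C.space 1 := by rw [hp]; exact Submodule.mem_span_singleton_self p
  exact sup_span_eq (h.le hi) (by rw [sp_dim C (by omega), sp_dim D (by omega)])
    (sp_mono C (by omega) (by omega) hpn) (hS.rd_not h hp (by omega))

lemma Symp.exists_p (hS : Symp B n) (C : Ch B n) : ∃ p, C.space 1 = F ∙ p := by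
  have := hS.fin
  have h1 := sp_dim C hS.pos
  obtain ⟨p, hp, hp0⟩ : ∃ z ∈ C.space 1, z ≠ 0 := by
    apply Submodule.exists_mem_ne_zero_of_ne_bot
    intro e
    rw [e, finrank_bot] at h1
    omega
  refine ⟨p, (Submodule.eq_of_le_of_finrank_eq ?_ ?_).symm⟩
  · rwa [Submodule.span_singleton_le_iff_mem]
  · rw [h1, finrank_span_singleton hp0]

/-- the relation after `k` rounds -/
def Rk (k : ℕ) (C D : Ch B n) : Prop :=
  (∀ i, 1 ≤ i → i + k ≤ n → D.space i ≤ C.space (i + k)) ∧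
  (∀ j, 1 ≤ j → j ≤ k → bperp B (C.space j) ⊓ D.space (n - k + j) ≤ D.space (n - k))

lemma mem_of_sup_span {U W : Submodule F V} {p x : V} (hUW : U ≤ W) (hp : p ∉ W) (hx : x ∈ U ⊔ F ∙ p)
    (hxW : x ∈ W) : x ∈ U := by
  obtain ⟨u, hu, y, hy, rfl⟩ := Submodule.mem_sup.1 hx
  obtain ⟨c, rfl⟩ := Submodule.mem_span_singleton.1 hy
  have h1 : c • p ∈ W := by
    have := W.sub_mem hxW (hUW hu)
    simpa using this
  by_cases hc : c = 0
  · simpa [hc] using hu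
  · exact absurd ((W.smul_mem_iff hc).1 h1) hp

lemma Symp.rk_comp (hS : Symp B n) {k : ℕ} (hk : k < n) {C C' D : Ch B n} (h1 : Rk k C C')
    (h2 : Rd C' D) : Rk (k + 1) C D := by
  have := hS.fin
  obtain ⟨p, hp⟩ := hS.exists_p C'
  have hpm : p ∈ C'.space 1 := by rw [hp]; exact Submodule.mem_span_singleton_self p
  have hb : ∀ j, 1 ≤ j → j ≤ k →
      bperp B (C.space j) ⊓ D.space (n - (k + 1) + j) ≤ D.space (n - (k + 1)) := by
    intro j hj1 hj2 x hx
    have hx1 : x ∈ C'.space (n - k) := by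
      apply h1.2 j hj1 hj2
      refine ⟨hx.1, ?_⟩
      have := h2.le (i := n - (k + 1) + j) (by omega)
      have e : n - (k + 1) + j + 1 = n - k + j := by omega
      rw [e] at this
      exact this hx.2
    have e : n - k = n - (k + 1) + 1 := by omega
    rw [e, ← hS.rd_eq h2 hp (by omega)] at hx1
    exact mem_of_sup_span (sp_mono D (by omega) (by omega))
      (hS.rd_not h2 hp (i := n - (k + 1) + j) (by omega)) hx1 hx.2
  refine ⟨?_, ?_⟩
  · intro i hi1 hi2
    refine (h2.le (i := i) (by omega)).trans ?_
    have := h1.1 (i + 1) (by omega) (by omega)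
    have e : i + 1 + k = i + (k + 1) := by omega
    rwa [e] at this
  · intro j hj1 hj2
    by_cases hjk : j = k + 1
    · subst hjk
      intro x hx
      have hx2 : x ∈ D.space n := by
        have := hx.2
        have e : n - (k + 1) + (k + 1) = n := by omega
        rwa [e] at this
      have hn1 : n = (n - 1) + 1 := by omega
      have hxp : x ∈ bperp B (C'.space n) := by
        have e1 := hS.rd_eq h2 hp (i := n - 1) (by have := hS.pos; omega)
        rw [← hn1] at e1
        rw [← e1, bperp_sup]
        refine ⟨?_, ?_⟩
        · exact sp_iso D le_rfl (by omega) hx2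
        · have h3 := h1.1 1 le_rfl (by omega)
          rw [add_comm] at h3
          rw [← hp]
          exact bperp_anti h3 hx.1
      rw [hS.self_n] at hxp
      have hx3 : x ∈ D.space (n - 1) := by
        have e1 := hS.rd_eq h2 hp (i := n - 1) (by have := hS.pos; omega)
        rw [← hn1] at e1
        rw [← e1] at hxp
        exact mem_of_sup_span (sp_mono D (by omega) le_rfl) (hS.rd_not h2 hp le_rfl) hxp hx2
      rcases Nat.eq_zero_or_pos k with rfl | hk0
      · exact hx3
      · apply hb k hk0 le_rfl
        refine ⟨bperp_anti (sp_mono C (by omega) (by omega)) hx.1, ?_⟩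
        have e : n - (k + 1) + k = n - 1 := by omega
        rw [e]; exact hx3
    · exact hb j hj1 (by omega)

lemma rk_uniq {k : ℕ} (hk : k < n) {C C' D : Ch B n} (h1 : Rk k C C')
    (h2 : Rd C' D) : C'.space 1 ≤ C.space (k + 1) ⊓ bperp B (D.space (n - 1)) := by
  refine le_inf ?_ ?_
  · have := h1.1 1 le_rfl (by omega)
    rwa [add_comm] at this
  · have h3 := h2.le (i := n - 1) (by omega)
    have e : n - 1 + 1 = n := by omega
    rw [e] at h3
    exact (sp_iso C' (by omega) le_rfl).trans (bperp_anti h3)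

lemma Symp.rk_P (hS : Symp B n) {k : ℕ} (hk : k < n) {C D : Ch B n} (h1 : Rk (k + 1) C D) :
    C.space (k + 1) ⊓ D.space n = ⊥ ∧
    finrank F (C.space (k + 1) ⊓ bperp B (D.space (n - 1)) : Submodule F V) = 1 := by
  have := hS.fin
  have e0 : n - (k + 1) + (k + 1) = n := by omega
  have hb := h1.2 (k + 1) (by omega) le_rfl
  rw [e0] at hb
  have hlow : D.space (n - (k + 1)) ≤ bperp B (C.space (k + 1)) := by
    rcases Nat.eq_zero_or_pos (n - (k + 1)) with h0 | h0
    · rw [h0, sp_zero]; exact bot_le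
    · have := h1.1 (n - (k + 1)) h0 (by omega)
      rw [e0] at this
      exact this.trans (sp_iso C le_rfl (by omega))
  have e1 : bperp B (C.space (k + 1)) ⊓ D.space n = D.space (n - (k + 1)) :=
    le_antisymm hb (le_inf hlow (sp_mono D (by omega) le_rfl))
  have e2 : C.space (k + 1) ⊔ D.space n = bperp B (D.space (n - (k + 1))) := by
    rw [← e1, hS.bperp_inf, hS.bb, hS.self_n]
  have hbot : C.space (k + 1) ⊓ D.space n = ⊥ := by
    have e3 := Submodule.finrank_sup_add_finrank_inf_eq (C.space (k + 1)) (D.space n)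
    have e4 := hS.finrank_bperp (D.space (n - (k + 1)))
    rw [e2, sp_dim C (by omega), sp_dim D le_rfl] at e3
    rw [sp_dim D (by omega)] at e4
    rw [← Submodule.finrank_eq_zero (R := F)]
    omega
  refine ⟨hbot, ?_⟩
  set P := C.space (k + 1) ⊓ bperp B (D.space (n - 1)) with hP
  have e5 : P ⊔ D.space n = bperp B (D.space (n - 1)) := by
    apply le_antisymm
    · exact sup_le inf_le_right (sp_iso D le_rfl (by omega))
    · intro x hx
      have hx1 : x ∈ C.space (k + 1) ⊔ D.space n := by
        rw [e2]; exact bperp_anti (sp_mono D (by omega) (by omega)) hx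
      obtain ⟨a, ha, b, hb', rfl⟩ := Submodule.mem_sup.1 hx1
      have hb2 : b ∈ bperp B (D.space (n - 1)) := sp_iso D le_rfl (by omega) hb'
      have ha2 : a ∈ bperp B (D.space (n - 1)) := by
        have := Submodule.sub_mem _ hx hb2
        simpa using this
      exact Submodule.add_mem_sup ⟨ha, ha2⟩ hb'
  have e6 := Submodule.finrank_sup_add_finrank_inf_eq P (D.space n)
  have e7 : P ⊓ D.space n = ⊥ := by
    rw [eq_bot_iff, ← hbot]; exact inf_le_inf_right _ inf_le_left
  have e8 := hS.finrank_bperp (D.space (n - 1))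
  rw [e5, e7, finrank_bot, sp_dim D le_rfl] at e6
  rw [sp_dim D (by omega)] at e8
  omega

lemma Symp.rk_exists (hS : Symp B n) {k : ℕ} (hk : k < n) {C D : Ch B n} (h1 : Rk (k + 1) C D) :
    ∃ C' : Ch B n, Rk k C C' ∧ Rd C' D := by
  have := hS.fin
  obtain ⟨hbot, hP1⟩ := hS.rk_P hk h1
  obtain ⟨p, hp, hp0⟩ : ∃ z ∈ C.space (k + 1) ⊓ bperp B (D.space (n - 1)), z ≠ 0 := by
    apply Submodule.exists_mem_ne_zero_of_ne_bot
    intro e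
    rw [e, finrank_bot] at hP1
    omega
  have hpC : p ∈ C.space (k + 1) := hp.1
  have hpn : ∀ i, i ≤ n → p ∉ D.space i := by
    intro i hi hpi
    apply hp0
    have : p ∈ C.space (k + 1) ⊓ D.space n := ⟨hpC, sp_mono D hi le_rfl hpi⟩
    rwa [hbot, Submodule.mem_bot] at this
  have hpp : ∀ i, i ≤ n - 1 → p ∈ bperp B (D.space i) := fun i hi =>
    bperp_anti (sp_mono D hi (by omega)) hp.2
  let sp : ℕ → Submodule F V := fun i =>
    if 1 ≤ i ∧ i ≤ n then D.space (i - 1) ⊔ F ∙ p else ⊥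
  have hsp : ∀ i, 1 ≤ i → i ≤ n → sp i = D.space (i - 1) ⊔ F ∙ p := fun i hi hi' =>
    if_pos ⟨hi, hi'⟩
  have hd : ∀ i, 1 ≤ i → i ≤ n → finrank F (sp i) = i := by
    intro i hi hi'
    rw [hsp i hi hi', finrank_sup_span (hpn _ (by omega)), sp_dim D (by omega)]
    omega
  let C' : Ch B n :=
    { space := sp
      isotropic := by
        intro i hi
        obtain ⟨hi, hi'⟩ := Finset.mem_Icc.1 hi
        rw [isTotIso_iff]
        apply hS.iso_ext (U := D.space (i - 1)) (sp_iso D (by omega) (by omega))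
        · rw [hsp i hi hi']; exact le_sup_left
        · rw [hsp i hi hi']
          refine sup_le (sp_iso D (by omega) (by omega)) ?_
          rw [Submodule.span_singleton_le_iff_mem]
          exact hpp _ (by omega)
        · rw [hd i hi hi', sp_dim D (by omega)]; omega
      finrank_eq := by
        intro i hi
        exact hd i (Finset.mem_Icc.1 hi).1 (Finset.mem_Icc.1 hi).2
      mono := by
        intro i hi j hj hij
        obtain ⟨hi, hi'⟩ := Finset.mem_Icc.1 hi
        obtain ⟨hj, hj'⟩ := Finset.mem_Icc.1 hj
        rw [hsp i hi hi', hsp j hj hj']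
        exact sup_le_sup_right (sp_mono D (by omega) (by omega)) _
      eq_bot := by
        intro i hi
        exact if_neg (fun h => hi (Finset.mem_Icc.2 h)) }
  have hC' : ∀ i, 1 ≤ i → i ≤ n → C'.space i = D.space (i - 1) ⊔ F ∙ p := hsp
  refine ⟨C', ⟨?_, ?_⟩, ?_, ?_, ?_⟩
  · intro i hi1 hi2
    rw [hC' i hi1 (by omega)]
    refine sup_le ?_ ?_
    · rcases Nat.eq_zero_or_pos (i - 1) with h0 | h0
      · rw [h0, sp_zero]; exact bot_le
      · have := h1.1 (i - 1) h0 (by omega)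
        have e : i - 1 + (k + 1) = i + k := by omega
        rwa [e] at this
    · rw [Submodule.span_singleton_le_iff_mem]
      exact sp_mono C (by omega) (by omega) hpC
  · intro j hj1 hj2 x hx
    have hx2 := hx.2
    rw [hC' _ (by omega) (by omega)] at hx2
    rw [hC' _ (by omega) (by omega)]
    obtain ⟨y, hy, z, hz, rfl⟩ := Submodule.mem_sup.1 hx2
    have hzj : z ∈ bperp B (C.space j) := by
      have : F ∙ p ≤ bperp B (C.space j) := by
        rw [Submodule.span_singleton_le_iff_mem]
        exact sp_iso C (by omega) (by omega) hpC
      exact this hz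
    have hyj : y ∈ bperp B (C.space j) := by
      have := Submodule.sub_mem _ hx.1 hzj
      simpa using this
    apply Submodule.add_mem_sup _ hz
    have e : n - k - 1 = n - (k + 1) := by omega
    rw [e]
    apply h1.2 j hj1 (by omega)
    refine ⟨hyj, ?_⟩
    have e : n - (k + 1) + j = n - k + j - 1 := by omega
    rw [e]; exact hy
  · intro i hi
    rw [D.eq_bot i (fun h => by have := Finset.mem_Icc.1 h; omega),
      C'.eq_bot i (fun h => by have := Finset.mem_Icc.1 h; omega)]
  · intro i hi1 hi2 hi3
    rw [hC' (i + 1) (by omega) (by omega)]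
    exact le_sup_left
  · intro i hi1 hi2 e
    apply hpn i hi2
    rw [e, hC' i hi1 hi2]
    exact le_sup_right (a := D.space (i - 1)) (Submodule.mem_span_singleton_self p)

lemma Symp.rk_mul (hS : Symp B n) [Fintype (Ch B n)] {k : ℕ} (hk : k < n) :
    relM (Rk (B := B) (n := n) k) * relM Rd = relM (Rk (k + 1)) := by
  have := hS.fin
  apply relM_mul
  · intro C C' D h1 h2
    exact hS.rk_comp hk h1 h2
  · intro C D h
    exact hS.rk_exists hk h
  · intro C C' C'' D h1 h2 h3 h4
    have hR := hS.rk_comp hk h1 h2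
    have hP := (hS.rk_P hk hR).2
    have e1 := Submodule.eq_of_le_of_finrank_eq (rk_uniq hk h1 h2)
      (by rw [hP, sp_dim _ hS.pos])
    have e2 := Submodule.eq_of_le_of_finrank_eq (rk_uniq hk h3 h4)
      (by rw [hP, sp_dim _ hS.pos])
    obtain ⟨p, hp⟩ := hS.exists_p C'
    have hp' : C''.space 1 = F ∙ p := by rw [← hp, e1, e2]
    apply ch_ext
    intro i hi1 hi2
    obtain ⟨m, rfl⟩ : ∃ m, i = m + 1 := ⟨i - 1, by omega⟩
    rw [← hS.rd_eq h2 hp (by omega), ← hS.rd_eq h4 hp' (by omega)]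

lemma Symp.rk_pow (hS : Symp B n) [Fintype (Ch B n)] {k : ℕ} (hk : k ≤ n) :
    relM (Rd (B := B) (n := n)) ^ k = relM (Rk k) := by
  have := hS.fin
  induction k with
  | zero =>
    rw [pow_zero]
    ext C D
    have : Rk 0 C D ↔ C = D := by
      constructor
      · rintro ⟨h1, -⟩
        apply ch_ext
        intro i hi1 hi2
        exact (Submodule.eq_of_le_of_finrank_eq (h1 i hi1 hi2)
          (by rw [sp_dim _ hi2, sp_dim _ (by omega)]; rfl)).symm
      · rintro rfl
        exact ⟨fun _ _ _ => le_rfl, fun j h1 h2 => by omega⟩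
    simp only [relM, this, Matrix.one_apply]
  | succ k ih =>
    rw [pow_succ, ih (by omega), hS.rk_mul (by omega)]

lemma rk_opp : Rk (B := B) (n := n) n = FlagOpp := by
  funext C D
  apply propext
  constructor
  · rintro ⟨-, h2⟩ i hi
    obtain ⟨hi1, hi2⟩ := Finset.mem_Icc.1 hi
    have := h2 i hi1 hi2
    rw [Nat.sub_self, sp_zero, zero_add] at this
    exact eq_bot_iff.2 this
  · intro h
    refine ⟨fun i h1 h2 => by omega, fun j h1 h2 => ?_⟩
    rw [Nat.sub_self, sp_zero, zero_add]
    exact (h j (Finset.mem_Icc.2 ⟨h1, h2⟩)).le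

/-- the word for the longest element -/
def wd (n : ℕ) : List (Fin n) := (List.replicate n (List.finRange n)).flatten

lemma wd_count (i : Fin n) : (wd n).count i = n := by
  unfold wd
  rw [List.count_flatten, List.map_replicate, List.sum_replicate,
    List.count_eq_one_of_mem (List.nodup_finRange n) (List.mem_finRange i)]
  simp

lemma Symp.word (hS : Symp B n) [Fintype (Ch B n)] :
    ((wd n).map (fun i : Fin n => adjM (Adj (B := B) (n := n) (i.val + 1)))).prod
      = relM FlagOpp := by
  have h1 := hS.rd_word (le_refl n)
  rw [← List.map_coe_finRange_eq_range, List.map_map] at h1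
  rw [← rk_opp, ← hS.rk_pow le_rfl]
  rw [wd, List.map_flatten, List.prod_flatten, List.map_replicate, List.map_replicate,
    List.prod_replicate]
  congr 1

end rounds
end PF

namespace PF
section conn

variable {F V : Type} [Field F] [AddCommGroup V] [Module F V]
variable {B : V →ₗ[F] V →ₗ[F] F} {n : ℕ}

/-- one gallery step in the extended flag -/
lemma Symp.move_step (hS : Symp B n) (C : Ch B n) {t : ℕ} (ht1 : 1 ≤ t) (ht2 : t < 2 * n) {x : V}
    (hx : x ∈ ex C (t + 1)) (hx' : x ∉ ex C t) :
    ∃ (j : ℕ) (D : Ch B n), 1 ≤ j ∧ j ≤ n ∧ (j = t ∨ j + t = 2 * n) ∧ Adj j C D ∧ x ∈ ex D t := by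
  have := hS.fin
  set Y := ex C (t - 1) ⊔ F ∙ x with hY
  have hxY : x ∈ Y := le_sup_right (a := ex C (t - 1)) (Submodule.mem_span_singleton_self x)
  have hx'' : x ∉ ex C (t - 1) := fun h => hx' (hS.ex_mono C (by omega) h)
  have hYd : finrank F Y = t := by
    rw [hY, finrank_sup_span hx'', hS.ex_dim C (by omega)]; omega
  have hYle : Y ≤ ex C (t + 1) := by
    refine sup_le (hS.ex_mono C (by omega)) ?_
    rwa [Submodule.span_singleton_le_iff_mem]
  by_cases htn : t ≤ n
  · obtain ⟨D, hD, hDY⟩ := hS.repl C ht1 htn Y le_sup_left hYle hYd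
    refine ⟨t, D, ht1, htn, Or.inl rfl, hD, ?_⟩
    rw [ex_le htn, hDY]; exact hxY
  · obtain ⟨j, hj⟩ : ∃ j, j + t = 2 * n := ⟨2 * n - t, by omega⟩
    obtain ⟨D, hD, hDY⟩ := hS.repl C (i := j) (by omega) (by omega) (bperp B Y)
      (by
        rw [← hS.ex_perp C (i := t + 1) (j := j - 1) (by omega)]
        exact bperp_anti hYle)
      (by
        rw [← hS.ex_perp C (i := t - 1) (j := j + 1) (by omega)]
        exact bperp_anti le_sup_left)
      (by
        have := hS.finrank_bperp Y
        omega)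
    refine ⟨j, D, by omega, by omega, Or.inr hj, hD, ?_⟩
    rw [← hS.ex_perp D (i := j) (j := t) (by omega), ex_le (by omega), hDY, hS.bb]
    exact hxY

lemma Symp.move (hS : Symp B n) {α : Type*} (h : Ch B n → α) {s i : ℕ} (hsn : s ≤ n)
    (hh : ∀ j, 1 ≤ j → j ≤ n → j ≠ s → ∀ C D, Adj j C D → h C = h D)
    (hi1 : 1 ≤ i) (hin : i ≤ n) (his : s ≠ i) (x : V) (m : ℕ) :
    ∀ C : Ch B n, x ∈ bperp B (C.space (i - 1)) → (i < s → x ∈ C.space s) → x ∈ ex C m → m ≤ 2 * n →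
      ∃ D : Ch B n, h C = h D ∧ (∀ j, j < i → D.space j = C.space j) ∧ D.space s = C.space s ∧
        x ∈ D.space i := by
  induction m with
  | zero =>
    intro C h1 h2 h3 h4
    refine ⟨C, rfl, fun _ _ => rfl, rfl, ?_⟩
    rw [← ex_le hin]; exact hS.ex_mono C (Nat.zero_le _) h3
  | succ t ih =>
    intro C h1 h2 h3 h4
    by_cases hti : t + 1 ≤ i
    · refine ⟨C, rfl, fun _ _ => rfl, rfl, ?_⟩
      rw [← ex_le hin]; exact hS.ex_mono C hti h3
    by_cases hx : x ∈ ex C t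
    · exact ih C h1 h2 hx (by omega)
    have htop : t ≤ 2 * n - i := by
      by_contra hcon
      apply hx
      rw [← ex_le (by omega), hS.ex_perp C (i := i - 1) (j := 2 * n - (i - 1)) (by omega)] at h1
      exact hS.ex_mono C (by omega) h1
    obtain ⟨j, D, hj1, hjn, hjt, hA, hxD⟩ := hS.move_step C (t := t) (by omega) (by omega) h3 hx
    have hji : i ≤ j := by omega
    have hjs : j ≠ s := by
      rintro rfl
      have hxs := h2 (by omega)
      apply hx
      rw [← ex_le hjn] at hxs
      exact hS.ex_mono C (by omega) hxs
    obtain ⟨E, hE1, hE2, hE3, hE4⟩ := ih D (by rw [← hA _ (by omega)]; exact h1)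
      (fun hlt => by rw [← hA s (by omega)]; exact h2 hlt) hxD (by omega)
    refine ⟨E, (hh j hj1 hjn hjs C D hA).trans hE1, ?_, ?_, hE4⟩
    · intro k hk
      rw [hE2 k hk, hA k (by omega)]
    · rw [hE3, hA s (by omega)]

lemma Symp.conn (hS : Symp B n) {α : Type*} (h : Ch B n → α) {s : ℕ} (hsn : s ≤ n)
    (hh : ∀ j, 1 ≤ j → j ≤ n → j ≠ s → ∀ C D, Adj j C D → h C = h D)
    (C D : Ch B n) (hCD : C.space s = D.space s) : h C = h D := by
  have := hS.fin
  have key : ∀ d i, i + d = n → ∀ C : Ch B n, C.space s = D.space s →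
      (∀ j, j ≤ i → C.space j = D.space j) → h C = h D := by
    intro d
    induction d with
    | zero =>
      intro i hi C _ hC
      have : C = D := ch_ext (fun j _ hj => hC j (by omega))
      rw [this]
    | succ d ih =>
      intro i hi C hCs hC
      by_cases his : s = i + 1
      · apply ih (i + 1) (by omega) C hCs
        intro j hj
        by_cases hj' : j = i + 1
        · rw [hj', ← his, hCs]
        · exact hC j (by omega)
      · obtain ⟨x, hx, hxi⟩ : ∃ x ∈ D.space (i + 1), x ∉ D.space i := by
          apply Set.not_subset.1
          intro hle
          have := Submodule.finrank_mono (R := F) (s := D.space (i + 1)) (t := D.space i) hle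
          rw [sp_dim D (by omega), sp_dim D (by omega)] at this
          omega
        obtain ⟨E, hE1, hE2, hE3, hE4⟩ := hS.move h hsn hh (i := i + 1) (by omega) (by omega) his x
          (2 * n) C
          (by
            rw [Nat.add_sub_cancel, hC i le_rfl]
            exact sp_iso D (by omega) (by omega) hx)
          (fun hlt => by rw [hCs]; exact sp_mono D (by omega) hsn hx)
          (by rw [hS.ex_top]; trivial) le_rfl
        rw [hE1]
        apply ih (i + 1) (by omega) E (by rw [hE3, hCs])
        intro j hj
        by_cases hj' : j = i + 1
        · subst hj'
          have hEi : E.space i = D.space i := by rw [hE2 i (by omega), hC i le_rfl]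
          rw [← sup_span_eq (sp_mono E (Nat.le_succ i) (by omega))
              (by rw [sp_dim E (by omega), sp_dim E (by omega)]) hE4 (by rw [hEi]; exact hxi),
            ← sup_span_eq (sp_mono D (Nat.le_succ i) (by omega))
              (by rw [sp_dim D (by omega), sp_dim D (by omega)]) hx hxi, hEi]
        · rw [hE2 j (by omega), hC j (by omega)]
  apply key n 0 (by omega) C hCD
  intro j hj
  have : j = 0 := by omega
  rw [this, sp_zero, sp_zero]

/-- the chamber system of the symplectic polar space -/
noncomputable def Symp.cs (hS : Symp B n) [Fintype F] [Fintype V] [Fintype (Ch B n)] :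
    CS (Ch B n) n (Fintype.card F) where
  adj i := Adj (i.val + 1)
  opp := FlagOpp
  hadj i := adj_equiv _
  hk i C := hS.panel C (by omega) (by omega)
  hsymm _ _ h := hS.opp_symm h
  hcom i := hS.comm_mat (by omega) (by omega)
  hstar := by
    intro i C D hCD
    obtain ⟨D0, -, hD0⟩ := hS.star (i := i.val + 1) (by omega) (by omega)
      (fun j h1 h2 _ => hCD j (Finset.mem_Icc.2 ⟨h1, h2⟩))
    exact ⟨D0, fun D' hD' hne => (hD0 D' hD').2 hne⟩
  l := wd n
  hl := wd_count
  hword := hS.word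
  hconn := by
    intro h hh C D
    apply hS.conn h (s := 0) (Nat.zero_le _)
    · intro j hj1 hj2 _ C D hA
      apply hh ⟨j - 1, by omega⟩
      have e : j - 1 + 1 = j := by omega
      simp only [e]
      exact hA
    · rw [sp_zero, sp_zero]

theorem final {F V : Type} [Field F] [Fintype F] [AddCommGroup V] [Module F V]
    {n : ℕ} {B : V →ₗ[F] V →ₗ[F] F} (hS : Symp B n) (hq : 8 * n * n < Fintype.card F)
    (𝓕 : Set (Ch B n)) (hE : IsEKRFlags 𝓕)
    (hc : (𝓕.ncard : ℝ) = (Nat.card (Ch B n) : ℝ) / ((Fintype.card F : ℝ) ^ n + 1)) :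
    ∃ s ∈ Finset.Icc 1 n, ∀ C ∈ 𝓕, Heavy 𝓕 s (SFlag.space C s) := by
  have := hS.fin
  have : Finite V := Module.finite_of_finite F
  have : Fintype V := Fintype.ofFinite V
  have : Finite (Ch B n) := ch_finite
  have : Fintype (Ch B n) := Fintype.ofFinite _
  rw [Nat.card_eq_fintype_card] at hc
  obtain ⟨s, hs⟩ := hS.cs.main hS.pos hq 𝓕 hE hc
  refine ⟨s.val + 1, Finset.mem_Icc.2 ⟨by omega, by omega⟩, ?_⟩
  intro C hC D hD
  have := hS.conn (fun C => C ∈ 𝓕) (s := s.val + 1) (by omega) (by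
    intro j hj1 hj2 hjs C D hA
    have key : ∀ C D, Adj j C D → C ∈ 𝓕 → D ∈ 𝓕 := by
      intro C D hA
      apply hs ⟨j - 1, by omega⟩ (fun e => hjs (by rw [← e]; simp only; omega))
      have e : j - 1 + 1 = j := by omega
      show Adj (j - 1 + 1) C D
      rw [e]; exact hA
    exact propext ⟨key C D hA, key D C ((adj_equiv j).symm hA)⟩) D C hD
  exact this.mpr hC

end conn
end PF

/-- For large `q`, every ratio-sharp EKR-set of chambers admits an
`s ∈ [n]` such that the `s`-space of every chamber of the set is heavy. -/
theorem stmt_4 (n : ℕ) (hn : 3 ≤ n) :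
    ∃ q₀ : ℕ, ∀ (F V : Type) [Field F] [Fintype F] [AddCommGroup V] [Module F V],
      ∀ q : ℕ, Fintype.card F = q → q₀ ≤ q →
      ∀ B : V →ₗ[F] V →ₗ[F] F, IsAltForm B → NondegForm B →
      FiniteDimensional F V → Module.finrank F V = 2 * n →
      ∀ 𝓕 : Set (SFlag B (Finset.Icc 1 n)),
        IsEKRFlags 𝓕 →
        (𝓕.ncard : ℝ) = (Nat.card (SFlag B (Finset.Icc 1 n)) : ℝ) / ((q : ℝ) ^ n + 1) →
        ∃ s ∈ Finset.Icc 1 n, ∀ C ∈ 𝓕, Heavy 𝓕 s (SFlag.space C s) := by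
  refine ⟨8 * n * n + 1, ?_⟩
  intro F V _ _ _ _ q hq hq0 B hB hB' hfin hdim 𝓕 hE hc
  subst hq
  exact PF.final ⟨hB, hB', hfin, hdim, by omega⟩ (by omega) 𝓕 hE hc
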